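/- arXiv:2301.11056 — 3 statements merged into one kernel-verified Lean document; each statement's English description precedes it below -/
import Mathlib

section
/- There exists a constant C ≥ 0 such that for every n ≥ 1, every full-rank lattice L in ℝⁿ contains a nonzero vector x with ‖x‖₁ ≤ (n/3.659 + C·log(n+1))·det(L)^{1/n}. -/
/-!
Let `X` be a logistic random variable and let `V(x) = E|x - X|`, so that `E V(X) = 2` and the
density of `X` is `e⁻ⱽ`. Two facts about the regions `{x ∈ ℝⁿ | ∑ V(xᵢ) ≤ n (2 + ε)}` are played
against each other.

* By the law of large numbers such a region has volume at least `e^(n (2 - ε)) / 2` for large `n`,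
  so by Blichfeldt's averaging argument a suitable dilate contains many points of some translate
  of the lattice.
* For reals `a₁, …, aₘ` the squared `L²` distance between their empirical distribution function and
  the logistic one is nonnegative, which reads `∑ |aᵥ - a_w| ≤ 2 m ∑ (V(aᵥ) - 1)`. Summed over the
  coordinates, this shows, as in Rankin's method, that among many points of the region two are at
  `ℓ¹` distance at most about `2 n (1 + ε)`.

Hence any `κ < e² / 2 = 3.694…` is admissible in large dimension, even without the logarithmic
term. The finitely many remaining dimensions are covered by Minkowski's theorem for the cube.
-/

open MeasureTheory Filter Topology Set ProbabilityTheory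
open scoped Pointwise

/-! ### Rankin's inequality for the logistic potential -/

/-- The potential `V(x) = E|x - X|` of a logistic random variable `X`, in closed form. The logistic
density is `e⁻ⱽ`, so that `V` is at the same time its information content. -/
noncomputable def logisticPotential (x : ℝ) : ℝ :=
  -Real.log (Real.sigmoid x) - Real.log (1 - Real.sigmoid x)

lemma one_sub_sigmoid_pos (x : ℝ) : 0 < 1 - Real.sigmoid x :=
  sub_pos.2 (Real.sigmoid_lt_one x)

lemma hasDerivAt_log_sigmoid (x : ℝ) :
    HasDerivAt (fun x => Real.log (Real.sigmoid x)) (1 - Real.sigmoid x) x := by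
  simpa [mul_div_cancel_left₀ _ (Real.sigmoid_pos x).ne'] using
    (Real.hasDerivAt_sigmoid x).log (Real.sigmoid_pos x).ne'

lemma continuous_logisticPotential : Continuous logisticPotential :=
  (continuous_sigmoid.log fun x => (Real.sigmoid_pos x).ne').neg.sub
    ((continuous_const.sub continuous_sigmoid).log fun x => (one_sub_sigmoid_pos x).ne')

lemma exp_neg_logisticPotential (x : ℝ) :
    Real.exp (-logisticPotential x) = Real.sigmoid x * (1 - Real.sigmoid x) := by
  rw [logisticPotential, neg_sub, sub_neg_eq_add, add_comm, Real.exp_add,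
    Real.exp_log (Real.sigmoid_pos x), Real.exp_log (one_sub_sigmoid_pos x)]

lemma hasDerivAt_log_sigmoid_sub_sigmoid (x : ℝ) :
    HasDerivAt (fun x => Real.log (Real.sigmoid x) - Real.sigmoid x)
      ((1 - Real.sigmoid x) ^ 2) x :=
  ((hasDerivAt_log_sigmoid x).sub (Real.hasDerivAt_sigmoid x)).congr_deriv (by ring)

lemma tendsto_log_sigmoid_sub_sigmoid_atTop :
    Tendsto (fun x => Real.log (Real.sigmoid x) - Real.sigmoid x) atTop (𝓝 (-1)) := by
  simpa using (Real.tendsto_sigmoid_atTop.log one_ne_zero).sub Real.tendsto_sigmoid_atTop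

lemma integrableOn_Ioi_one_sub_sigmoid_sq (a : ℝ) :
    IntegrableOn (fun t => (1 - Real.sigmoid t) ^ 2) (Ioi a) :=
  integrableOn_Ioi_deriv_of_nonneg' (fun x _ => hasDerivAt_log_sigmoid_sub_sigmoid x)
    (fun _ _ => sq_nonneg _) tendsto_log_sigmoid_sub_sigmoid_atTop

lemma integral_Ioi_one_sub_sigmoid_sq (a : ℝ) :
    ∫ t in Ioi a, (1 - Real.sigmoid t) ^ 2 =
      -Real.log (Real.sigmoid a) - (1 - Real.sigmoid a) := by
  rw [integral_Ioi_of_hasDerivAt_of_tendsto' (fun x _ => hasDerivAt_log_sigmoid_sub_sigmoid x)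
    (integrableOn_Ioi_one_sub_sigmoid_sq a) tendsto_log_sigmoid_sub_sigmoid_atTop]
  ring

lemma integrableOn_Iic_sigmoid_sq (a : ℝ) :
    IntegrableOn (fun t => Real.sigmoid t ^ 2) (Iic a) := by
  have h := (integrableOn_Ioi_one_sub_sigmoid_sq (-a)).comp_neg_Iio
  simp only [← Real.sigmoid_neg, neg_neg] at h
  exact h.congr_set_ae Iio_ae_eq_Iic.symm

lemma integral_Iic_sigmoid_sq (a : ℝ) :
    ∫ t in Iic a, Real.sigmoid t ^ 2 = -Real.log (1 - Real.sigmoid a) - Real.sigmoid a := by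
  have h := integral_Ioi_one_sub_sigmoid_sq (-a)
  rw [← integral_comp_neg_Iic] at h
  simpa only [← Real.sigmoid_neg, neg_neg] using h

/-- The deviation of the empirical distribution function of the point `a` from the logistic
distribution function, as functions of `t`. Rankin's inequality is the positivity of the Gram
matrix of these deviations in `L²(ℝ)`. -/
noncomputable def logisticResidual (a t : ℝ) : ℝ := (Ioi a).indicator 1 t - Real.sigmoid t

lemma eqOn_Iic_logisticResidual_sq (a : ℝ) :
    EqOn (fun t => Real.sigmoid t ^ 2) (fun t => logisticResidual a t ^ 2) (Iic a) :=
  fun t ht => by simp [logisticResidual, not_lt.2 (mem_Iic.1 ht)]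

lemma eqOn_Ioi_logisticResidual_sq (a : ℝ) :
    EqOn (fun t => (1 - Real.sigmoid t) ^ 2) (fun t => logisticResidual a t ^ 2) (Ioi a) :=
  fun t ht => by simp [logisticResidual, mem_Ioi.1 ht]

lemma integrable_logisticResidual_sq (a : ℝ) : Integrable fun t => logisticResidual a t ^ 2 := by
  rw [← integrableOn_univ, ← Iic_union_Ioi (a := a)]
  exact ((integrableOn_Iic_sigmoid_sq a).congr_fun (eqOn_Iic_logisticResidual_sq a)
    measurableSet_Iic).union ((integrableOn_Ioi_one_sub_sigmoid_sq a).congr_fun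
      (eqOn_Ioi_logisticResidual_sq a) measurableSet_Ioi)

lemma integral_logisticResidual_sq (a : ℝ) :
    ∫ t, logisticResidual a t ^ 2 = logisticPotential a - 1 := by
  have hint := integrable_logisticResidual_sq a
  rw [← setIntegral_univ, ← Iic_union_Ioi (a := a),
    setIntegral_union (Iic_disjoint_Ioi le_rfl) measurableSet_Ioi hint.integrableOn
      hint.integrableOn,
    ← setIntegral_congr_fun measurableSet_Iic (eqOn_Iic_logisticResidual_sq a),
    ← setIntegral_congr_fun measurableSet_Ioi (eqOn_Ioi_logisticResidual_sq a),
    integral_Iic_sigmoid_sq, integral_Ioi_one_sub_sigmoid_sq, logisticPotential]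
  ring

lemma logisticResidual_sub_sq (a b t : ℝ) :
    (logisticResidual a t - logisticResidual b t) ^ 2 = (uIoc a b).indicator 1 t := by
  rw [logisticResidual, logisticResidual, sub_sub_sub_cancel_right]
  rcases le_or_gt t a with ha | ha <;> rcases le_or_gt t b with hb | hb <;>
    simp [mem_uIoc, ha, hb, ha.not_gt, hb.not_gt]

lemma logisticResidual_mul (a b t : ℝ) :
    logisticResidual a t * logisticResidual b t =
      (logisticResidual a t ^ 2 + logisticResidual b t ^ 2 - (uIoc a b).indicator 1 t) / 2 := by
  rw [← logisticResidual_sub_sq]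
  ring

lemma integrable_indicator_uIoc_one (a b : ℝ) : Integrable ((uIoc a b).indicator (1 : ℝ → ℝ)) :=
  (integrable_indicator_iff measurableSet_uIoc).2 (integrableOn_const (by simp [Real.volume_uIoc]))

lemma integrable_logisticResidual_mul (a b : ℝ) :
    Integrable fun t => logisticResidual a t * logisticResidual b t := by
  simp_rw [logisticResidual_mul]
  exact (((integrable_logisticResidual_sq a).add (integrable_logisticResidual_sq b)).sub
    (integrable_indicator_uIoc_one a b)).div_const 2

lemma integral_logisticResidual_mul (a b : ℝ) :
    ∫ t, logisticResidual a t * logisticResidual b t =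
      (logisticPotential a + logisticPotential b - 2 - |a - b|) / 2 := by
  have ha := integrable_logisticResidual_sq a
  have hb := integrable_logisticResidual_sq b
  have hadd : Integrable fun t => logisticResidual a t ^ 2 + logisticResidual b t ^ 2 := ha.add hb
  simp_rw [logisticResidual_mul]
  rw [integral_div, integral_sub hadd (integrable_indicator_uIoc_one a b), integral_add ha hb,
    integral_logisticResidual_sq, integral_logisticResidual_sq,
    integral_indicator_one measurableSet_uIoc, Measure.real, Real.volume_uIoc,
    ENNReal.toReal_ofReal (abs_nonneg _), abs_sub_comm]
  ring

theorem sum_sum_abs_sub_le_sum_logisticPotential {α : Type*} (T : Finset α) (a : α → ℝ) :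
    ∑ v ∈ T, ∑ w ∈ T, |a v - a w| ≤ 2 * T.card * ∑ v ∈ T, (logisticPotential (a v) - 1) := by
  have hint (v w : α) := integrable_logisticResidual_mul (a v) (a w)
  have hnonneg : 0 ≤ ∑ v ∈ T, ∑ w ∈ T,
      (logisticPotential (a v) + logisticPotential (a w) - 2 - |a v - a w|) / 2 :=
    calc
      0 ≤ ∫ t, (∑ v ∈ T, logisticResidual (a v) t) ^ 2 := integral_nonneg fun t => sq_nonneg _
      _ = ∑ v ∈ T, ∑ w ∈ T, ∫ t, logisticResidual (a v) t * logisticResidual (a w) t := by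
        simp_rw [sq, Finset.sum_mul_sum]
        rw [integral_finsetSum _ fun v _ => integrable_finsetSum _ fun w _ => hint v w]
        exact Finset.sum_congr rfl fun v _ => integral_finsetSum _ fun w _ => hint v w
      _ = _ := by simp_rw [integral_logisticResidual_mul]
  simp only [← Finset.sum_div, Finset.sum_sub_distrib, Finset.sum_add_distrib, Finset.sum_const,
    nsmul_eq_mul, ← Finset.mul_sum] at hnonneg ⊢
  linarith

theorem sum_offDiag_sum_abs_sub_le_of_logisticPotential_le {α ι : Type*} [Fintype ι]
    (T : Finset α) (x : α → ι → ℝ) {A : ℝ} (hA : ∀ v ∈ T, ∑ i, logisticPotential (x v i) ≤ A) :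
    ∑ p ∈ T.offDiag, ∑ i, |x p.1 i - x p.2 i| ≤ 2 * T.card ^ 2 * (A - Fintype.card ι) := by
  classical
  have hpotential : ∑ v ∈ T, ∑ i, (logisticPotential (x v i) - 1) ≤
      T.card * (A - Fintype.card ι) := by
    rw [← nsmul_eq_mul]
    refine Finset.sum_le_card_nsmul _ _ _ fun v hv => ?_
    simpa [Finset.sum_sub_distrib] using hA v hv
  calc
    ∑ p ∈ T.offDiag, ∑ i, |x p.1 i - x p.2 i|
      ≤ ∑ p ∈ T ×ˢ T, ∑ i, |x p.1 i - x p.2 i| :=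
        Finset.sum_le_sum_of_subset_of_nonneg (T.product_sdiff_diag ▸ Finset.sdiff_subset)
          fun p _ _ => Finset.sum_nonneg fun i _ => abs_nonneg _
    _ = ∑ i, ∑ v ∈ T, ∑ w ∈ T, |x v i - x w i| := by
        rw [Finset.sum_comm]
        exact Finset.sum_congr rfl fun i _ => Finset.sum_product _ _ _
    _ ≤ ∑ i, 2 * T.card * ∑ v ∈ T, (logisticPotential (x v i) - 1) :=
        Finset.sum_le_sum fun i _ => sum_sum_abs_sub_le_sum_logisticPotential T fun v => x v i
    _ = 2 * T.card * ∑ v ∈ T, ∑ i, (logisticPotential (x v i) - 1) := by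
        rw [← Finset.mul_sum, Finset.sum_comm]
    _ ≤ 2 * T.card * (T.card * (A - Fintype.card ι)) := by gcongr
    _ = 2 * T.card ^ 2 * (A - Fintype.card ι) := by ring

theorem exists_ne_sum_abs_sub_le_of_logisticPotential_le {α ι : Type*} [Fintype ι]
    {T : Finset α} (hT : 1 < T.card) (x : α → ι → ℝ) {A : ℝ}
    (hA : ∀ v ∈ T, ∑ i, logisticPotential (x v i) ≤ A) :
    ∃ v ∈ T, ∃ w ∈ T, v ≠ w ∧
      (T.card - 1) * ∑ i, |x v i - x w i| ≤ 2 * T.card * (A - Fintype.card ι) := by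
  classical
  have hcard : (1 : ℝ) < T.card := mod_cast hT
  have hpairs : T.offDiag.Nonempty :=
    let ⟨v, hv, w, hw, hne⟩ := Finset.one_lt_card.1 hT
    ⟨(v, w), Finset.mem_offDiag.2 ⟨hv, hw, hne⟩⟩
  have hsum := sum_offDiag_sum_abs_sub_le_of_logisticPotential_le T x hA
  have haverage : ∑ p ∈ T.offDiag, (T.card - 1) * ∑ i, |x p.1 i - x p.2 i| ≤
      ∑ _p ∈ T.offDiag, 2 * T.card * (A - Fintype.card ι) := by
    rw [← Finset.mul_sum, Finset.sum_const, nsmul_eq_mul, Finset.offDiag_card,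
      Nat.cast_sub (Nat.le_mul_self _), Nat.cast_mul]
    linarith [mul_le_mul_of_nonneg_left hsum (sub_pos.2 hcard).le]
  obtain ⟨⟨v, w⟩, hvw, hle⟩ := Finset.exists_le_of_sum_le hpairs haverage
  obtain ⟨hv, hw, hne⟩ := Finset.mem_offDiag.1 hvw
  exact ⟨v, hv, w, hw, hne, hle⟩

/-! ### The logistic distribution -/

/-- The standard logistic distribution, given by its density `e⁻ⱽ`, where `V` is the logistic
potential. -/
noncomputable def logisticMeasure : Measure ℝ :=
  volume.withDensity fun x => ENNReal.ofReal (Real.exp (-logisticPotential x))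

lemma measurePreserving_sigmoid :
    MeasurePreserving Real.sigmoid logisticMeasure (volume.restrict (Ioo 0 1)) := by
  refine ⟨continuous_sigmoid.measurable, Measure.ext fun s hs => ?_⟩
  have hpre : MeasurableSet (Real.sigmoid ⁻¹' s) := continuous_sigmoid.measurable hs
  have hchange := lintegral_image_eq_lintegral_abs_deriv_mul hpre
    (fun x _ => (Real.hasDerivAt_sigmoid x).hasDerivWithinAt) Real.sigmoid_injective.injOn 1
  rw [image_preimage_eq_inter_range, Real.range_sigmoid] at hchange
  rw [Measure.map_apply continuous_sigmoid.measurable hs, Measure.restrict_apply hs,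
    logisticMeasure, withDensity_apply _ hpre]
  simpa [exp_neg_logisticPotential,
    fun x => abs_of_pos (mul_pos (Real.sigmoid_pos x) (one_sub_sigmoid_pos x))] using hchange.symm

instance : IsProbabilityMeasure logisticMeasure :=
  ⟨by simpa using measurePreserving_sigmoid.measure_preimage nullMeasurableSet_univ⟩

lemma memLp_log_Ioo_zero_one : MemLp Real.log 2 (volume.restrict (Ioo 0 1)) := by
  rw [memLp_two_iff_integrable_sq Real.measurable_log.aestronglyMeasurable]
  have hint : IntegrableOn (fun u : ℝ => 16 * u ^ (-(1 / 2) : ℝ)) (Ioo 0 1) :=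
    ((intervalIntegral.integrableOn_Ioo_rpow_iff zero_lt_one).2 (by norm_num)).const_mul 16
  refine hint.mono' (Real.measurable_log.pow_const 2).aestronglyMeasurable ?_
  refine (ae_restrict_iff' measurableSet_Ioo).2 (Eventually.of_forall fun u hu => ?_)
  have hlog := (Real.abs_log_mul_self_rpow_lt u (1 / 4) hu.1 hu.2.le (by norm_num)).le
  have hsq : Real.log u ^ 2 * u ^ (1 / 2 : ℝ) ≤ 16 := by
    have hhalf : u ^ (1 / 2 : ℝ) = (u ^ (1 / 4 : ℝ)) ^ 2 := by
      rw [← Real.rpow_mul_natCast hu.1.le]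
      norm_num
    calc
      Real.log u ^ 2 * u ^ (1 / 2 : ℝ) = |Real.log u * u ^ (1 / 4 : ℝ)| ^ 2 := by
        rw [sq_abs, mul_pow, hhalf]
      _ ≤ (1 / (1 / 4)) ^ 2 := by gcongr
      _ = 16 := by norm_num
  rw [Real.norm_of_nonneg (sq_nonneg _), Real.rpow_neg hu.1.le, ← div_eq_mul_inv,
    le_div_iff₀ (Real.rpow_pos_of_pos hu.1 _)]
  exact hsq

lemma measurePreserving_one_sub_Ioo_zero_one :
    MeasurePreserving (fun u : ℝ => 1 - u) (volume.restrict (Ioo 0 1))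
      (volume.restrict (Ioo 0 1)) := by
  simpa using (volume.measurePreserving_sub_left (1 : ℝ)).restrict_preimage
    (measurableSet_Ioo (a := (0 : ℝ)) (b := 1))

lemma integral_log_Ioo_zero_one : ∫ u in Ioo (0 : ℝ) 1, Real.log u = -1 := by
  rw [← integral_Ioc_eq_integral_Ioo, ← intervalIntegral.integral_of_le zero_le_one, integral_log]
  simp

lemma memLp_logisticPotential : MemLp logisticPotential 2 logisticMeasure :=
  (memLp_log_Ioo_zero_one.comp_measurePreserving measurePreserving_sigmoid).neg.sub
    ((memLp_log_Ioo_zero_one.comp_measurePreserving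
      measurePreserving_one_sub_Ioo_zero_one).comp_measurePreserving measurePreserving_sigmoid)

lemma integral_logisticPotential : ∫ x, logisticPotential x ∂logisticMeasure = 2 := by
  have hlog : Integrable Real.log (volume.restrict (Ioo (0 : ℝ) 1)) :=
    memLp_log_Ioo_zero_one.integrable one_le_two
  have hlog_neg : Integrable (fun u => -Real.log u) (volume.restrict (Ioo (0 : ℝ) 1)) := hlog.neg
  have hlog' : Integrable (fun u => Real.log (1 - u)) (volume.restrict (Ioo (0 : ℝ) 1)) :=
    measurePreserving_one_sub_Ioo_zero_one.integrable_comp_of_integrable hlog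
  calc
    ∫ x, logisticPotential x ∂logisticMeasure
      = ∫ u in Ioo (0 : ℝ) 1, (-Real.log u - Real.log (1 - u)) := by
        rw [← measurePreserving_sigmoid.map_eq, integral_map measurePreserving_sigmoid.aemeasurable
          (measurePreserving_sigmoid.map_eq ▸ (hlog.neg.sub hlog').aestronglyMeasurable)]
        rfl
    _ = -(∫ u in Ioo (0 : ℝ) 1, Real.log u) - ∫ u in Ioo (0 : ℝ) 1, Real.log (1 - u) := by
        rw [integral_sub hlog_neg hlog', integral_neg]
    _ = 2 := by
        rw [measurePreserving_one_sub_Ioo_zero_one.integral_comp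
          (Homeomorph.subLeft (1 : ℝ)).measurableEmbedding Real.log, integral_log_Ioo_zero_one]
        norm_num

/-! ### Volume of typical sets -/

section TypicalSet

variable {ι Ω : Type*} [Fintype ι] [MeasurableSpace Ω]

lemma pi_withDensity_ofReal {α : ι → Type*} [∀ i, MeasurableSpace (α i)]
    {μ : ∀ i, Measure (α i)} [∀ i, SigmaFinite (μ i)] {f : ∀ i, α i → ℝ}
    (hf : ∀ i, Integrable (f i) (μ i)) (hf0 : ∀ i a, 0 ≤ f i a) :
    Measure.pi (fun i => (μ i).withDensity fun a => ENNReal.ofReal (f i a)) =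
      (Measure.pi μ).withDensity fun x => ENNReal.ofReal (∏ i, f i (x i)) := by
  refine Measure.pi_eq fun s hs => ?_
  rw [withDensity_apply _ (MeasurableSet.univ_pi hs), Measure.restrict_pi_pi,
    ← ofReal_integral_eq_lintegral_ofReal
      (Integrable.fintype_prod_dep fun i => (hf i).integrableOn)
      (Eventually.of_forall fun x => Finset.prod_nonneg fun i _ => hf0 i _),
    integral_fintype_prod_eq_prod,
    ENNReal.ofReal_prod_of_nonneg fun i _ => integral_nonneg (hf0 i)]
  refine Finset.prod_congr rfl fun i _ => ?_
  rw [withDensity_apply _ (hs i), ofReal_integral_eq_lintegral_ofReal (hf i).integrableOn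
    (Eventually.of_forall (hf0 i))]

lemma inv_two_le_pi_abs_sum_sub_lt [Nonempty ι] {ν : Measure Ω} [IsProbabilityMeasure ν]
    {X : Ω → ℝ} (hX : MemLp X 2 ν) {ε : ℝ} (hε : 0 < ε)
    (hcard : 2 * Var[X; ν] ≤ Fintype.card ι * ε ^ 2) :
    2⁻¹ ≤ Measure.pi (fun _ : ι => ν)
      {ω | |∑ i, X (ω i) - (Fintype.card ι : ℝ) * ∫ a, X a ∂ν| < Fintype.card ι * ε} := by
  set P := Measure.pi fun _ : ι => ν
  set S : (ι → Ω) → ℝ := ∑ i, fun ω => X (ω i)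
  have hmem (i : ι) : MemLp (fun ω : ι → Ω => X (ω i)) 2 P :=
    hX.comp_measurePreserving (measurePreserving_eval _ i)
  have hmean : ∫ η, S η ∂P = (Fintype.card ι : ℝ) * ∫ a, X a ∂ν := by
    simp_rw [S, Finset.sum_apply]
    rw [integral_finsetSum _ fun i _ => (hmem i).integrable one_le_two]
    simp [P, integral_comp_eval (μ := fun _ : ι => ν) hX.aestronglyMeasurable]
  have hvar : Var[S; P] = Fintype.card ι * Var[X; ν] := by
    simp [S, P, variance_sum_pi fun _ : ι => hX]
  have hcheb : P {ω | Fintype.card ι * ε ≤ |S ω - (∫ η, S η ∂P)|} ≤ 2⁻¹ := by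
    refine (meas_ge_le_variance_div_sq (memLp_finsetSum' _ fun i _ => hmem i)
      (by positivity)).trans ?_
    rw [← ENNReal.ofReal_ofNat, ← ENNReal.ofReal_inv_of_pos two_pos, hvar]
    refine ENNReal.ofReal_le_ofReal ?_
    rw [div_le_iff₀ (by positivity)]
    linarith [mul_le_mul_of_nonneg_left hcard (Nat.cast_nonneg (Fintype.card ι))]
  have hcompl : {ω | |S ω - (∫ η, S η ∂P)| < Fintype.card ι * ε} =
      {ω | Fintype.card ι * ε ≤ |S ω - (∫ η, S η ∂P)|}ᶜ := by
    ext ω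
    simp
  have hmass : 2⁻¹ ≤ P {ω | |S ω - (∫ η, S η ∂P)| < Fintype.card ι * ε} := by
    rw [hcompl]
    have htotal := measure_univ_le_add_compl (μ := P)
      {ω | Fintype.card ι * ε ≤ |S ω - (∫ η, S η ∂P)|}
    rw [measure_univ, ← ENNReal.inv_two_add_inv_two] at htotal
    exact (ENNReal.add_le_add_iff_left (by simp)).1 (htotal.trans (by gcongr))
  rw [hmean] at hmass
  simpa only [S, Finset.sum_apply] using hmass

lemma integrable_of_withDensity_ofReal_lt_top {μ : Measure Ω} {f : Ω → ℝ}
    (hf : AEStronglyMeasurable f μ) (hf0 : ∀ a, 0 ≤ f a)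
    (hfin : μ.withDensity (fun a => ENNReal.ofReal (f a)) univ < ⊤) : Integrable f μ := by
  refine ⟨hf, ?_⟩
  rwa [hasFiniteIntegral_iff_ofReal (Eventually.of_forall hf0), ← setLIntegral_univ,
    ← withDensity_apply _ .univ]

lemma pi_withDensity_exp_neg {μ : Measure Ω} [SigmaFinite μ] {V : Ω → ℝ}
    (hV : Integrable (fun a => Real.exp (-V a)) μ) :
    Measure.pi (fun _ : ι => μ.withDensity fun a => ENNReal.ofReal (Real.exp (-V a))) =
      (Measure.pi fun _ : ι => μ).withDensity fun x =>
        ENNReal.ofReal (Real.exp (-∑ i, V (x i))) := by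
  simp_rw [← Finset.sum_neg_distrib, Real.exp_sum]
  exact pi_withDensity_ofReal (fun _ => hV) fun _ a => (Real.exp_pos _).le

theorem half_exp_le_pi_sum_le [Nonempty ι] {μ ν : Measure Ω} [SigmaFinite μ]
    [IsProbabilityMeasure ν] {V : Ω → ℝ} (hV : MemLp V 2 ν)
    (hν : ν = μ.withDensity fun a => ENNReal.ofReal (Real.exp (-V a))) (hVm : Measurable V)
    {ε : ℝ} (hε : 0 < ε) (hcard : 2 * Var[V; ν] ≤ Fintype.card ι * ε ^ 2) :
    ENNReal.ofReal (Real.exp (Fintype.card ι * ((∫ a, V a ∂ν) - ε)) / 2) ≤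
      Measure.pi (fun _ : ι => μ)
        {x | ∑ i, V (x i) ≤ Fintype.card ι * ((∫ a, V a ∂ν) + ε)} := by
  set h := ∫ a, V a ∂ν
  set n : ℝ := (Fintype.card ι : ℝ)
  set S := {x : ι → Ω | |∑ i, V (x i) - n * h| < n * ε}
  have hint : Integrable (fun a => Real.exp (-V a)) μ :=
    integrable_of_withDensity_ofReal_lt_top (by fun_prop) (fun a => (Real.exp_pos _).le)
      (hν ▸ measure_lt_top ν univ)
  have hdensity : Measure.pi (fun _ : ι => ν) S ≤
      ENNReal.ofReal (Real.exp (-(n * (h - ε)))) * Measure.pi (fun _ : ι => μ) S := by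
    rw [hν, pi_withDensity_exp_neg hint, withDensity_apply', ← setLIntegral_const]
    refine setLIntegral_mono measurable_const fun x hx => ?_
    gcongr
    linarith [(abs_lt.1 (mem_ofPred.1 hx)).1]
  have hhalf : 2⁻¹ ≤ ENNReal.ofReal (Real.exp (-(n * (h - ε)))) * Measure.pi (fun _ : ι => μ) S :=
    (inv_two_le_pi_abs_sum_sub_lt hV hε hcard).trans hdensity
  calc
    ENNReal.ofReal (Real.exp (n * (h - ε)) / 2)
      = ENNReal.ofReal (Real.exp (n * (h - ε))) * 2⁻¹ := by
        rw [div_eq_mul_inv, ENNReal.ofReal_mul (Real.exp_pos _).le,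
          ENNReal.ofReal_inv_of_pos two_pos, ENNReal.ofReal_ofNat]
    _ ≤ ENNReal.ofReal (Real.exp (n * (h - ε))) *
          (ENNReal.ofReal (Real.exp (-(n * (h - ε)))) * Measure.pi (fun _ : ι => μ) S) := by
        gcongr
    _ = Measure.pi (fun _ : ι => μ) S := by
        rw [← mul_assoc, ← ENNReal.ofReal_mul (Real.exp_pos _).le, ← Real.exp_add, add_neg_cancel,
          Real.exp_zero, ENNReal.ofReal_one, one_mul]
    _ ≤ Measure.pi (fun _ : ι => μ) {x | ∑ i, V (x i) ≤ n * (h + ε)} :=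
        measure_mono fun x hx => by
          rw [mem_ofPred_eq]
          linarith [(abs_lt.1 (mem_ofPred.1 hx)).2]

end TypicalSet

theorem half_exp_le_volume_sum_logisticPotential_le {ι : Type*} [Fintype ι] [Nonempty ι] {ε : ℝ}
    (hε : 0 < ε)
    (hcard : 2 * Var[logisticPotential; logisticMeasure] ≤ Fintype.card ι * ε ^ 2) :
    ENNReal.ofReal (Real.exp (Fintype.card ι * (2 - ε)) / 2) ≤
      volume {x : ι → ℝ | ∑ i, logisticPotential (x i) ≤ Fintype.card ι * (2 + ε)} := by
  simpa only [integral_logisticPotential, volume_pi] using half_exp_le_pi_sum_le (μ := volume)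
    memLp_logisticPotential rfl continuous_logisticPotential.measurable hε hcard

/-! ### Blichfeldt's argument for lattices -/

theorem exists_finset_card_eq_vadd_mem {G E : Type*} [AddGroup G] [Countable G] [AddAction G E]
    [MeasurableSpace E] [MeasurableConstVAdd G E] {μ : Measure E} [VAddInvariantMeasure G E μ]
    {F S : Set E} (hF : IsAddFundamentalDomain G F μ) (hS : MeasurableSet S) {M : ℕ}
    (hM : M * μ F < μ S) :
    ∃ z : E, ∃ T : Finset G, T.card = M + 1 ∧ ∀ g ∈ T, g +ᵥ z ∈ S := by
  classical
  contrapose! hM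
  calc
    μ S = ∫⁻ z, S.indicator 1 z ∂μ := (lintegral_indicator_one hS).symm
    _ = ∫⁻ z in F, ∑' g : G, S.indicator 1 (g +ᵥ z) ∂μ := by
      rw [hF.lintegral_eq_tsum'', lintegral_tsum]
      exact fun g => ((measurable_one.indicator hS).comp (measurable_const_vadd g)).aemeasurable
    _ ≤ ∫⁻ _ in F, M ∂μ := by
      refine setLIntegral_mono measurable_const fun z _ => ?_
      rw [ENNReal.tsum_eq_iSup_sum]
      refine iSup_le fun T => ?_
      have hcount : (T.filter fun g => g +ᵥ z ∈ S).card ≤ M := by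
        by_contra! hlt
        obtain ⟨T', hT', hcard⟩ := Finset.exists_subset_card_eq (Nat.succ_le_of_lt hlt)
        obtain ⟨g, hg, hgS⟩ := hM z T' hcard
        exact hgS (Finset.mem_filter.1 (hT' hg)).2
      simpa [indicator_apply, Finset.sum_boole] using hcount
    _ = M * μ F := by rw [setLIntegral_const]

section Lattice

variable {E : Type*} [NormedAddCommGroup E] [NormedSpace ℝ E] [FiniteDimensional ℝ E]
  [MeasurableSpace E] [BorelSpace E] (L : Submodule ℤ E) [DiscreteTopology L] [IsZLattice ℝ L]
  (μ : Measure E) [μ.IsAddHaarMeasure]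

lemma exists_isAddFundamentalDomain_measure_eq_covolume :
    ∃ F, IsAddFundamentalDomain L F μ ∧ μ F = ENNReal.ofReal (ZLattice.covolume L μ) := by
  have hF := ZLattice.isAddFundamentalDomain (Module.Free.chooseBasis ℤ L) μ
  refine ⟨_, hF, ?_⟩
  rw [ZLattice.covolume_eq_measure_fundamentalDomain L μ hF,
    ofReal_measureReal (ZSpan.fundamentalDomain_isBounded _).measure_lt_top.ne]

lemma exists_finset_lattice_card_eq_add_mem {S : Set E} (hS : MeasurableSet S) {M : ℕ}
    (hM : ENNReal.ofReal (M * ZLattice.covolume L μ) < μ S) :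
    ∃ z : E, ∃ T : Finset L, T.card = M + 1 ∧ ∀ v ∈ T, (v : E) + z ∈ S := by
  obtain ⟨F, hF, hμF⟩ := exists_isAddFundamentalDomain_measure_eq_covolume L μ
  have : MeasurableConstVAdd L E := inferInstanceAs (MeasurableConstVAdd L.toAddSubgroup E)
  have : VAddInvariantMeasure L E μ :=
    inferInstanceAs (VAddInvariantMeasure L.toAddSubgroup E μ)
  refine exists_finset_card_eq_vadd_mem hF hS ?_
  rwa [hμF, ← ENNReal.ofReal_natCast, ← ENNReal.ofReal_mul M.cast_nonneg]

end Lattice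

section Pi

variable {ι : Type*} [Fintype ι] (L : Submodule ℤ (ι → ℝ)) [DiscreteTopology L]
  [IsZLattice ℝ L]

lemma covolume_rpow_one_div_card_pow [Nonempty ι] :
    (ZLattice.covolume L ^ (1 / Fintype.card ι : ℝ)) ^ Fintype.card ι = ZLattice.covolume L := by
  rw [one_div, Real.rpow_inv_natCast_pow (ZLattice.covolume_pos L volume).le Fintype.card_ne_zero]

lemma exists_ne_zero_mem_sum_abs_le_card_mul_covolume [Nonempty ι] :
    ∃ x ∈ L, x ≠ 0 ∧
      ∑ i, |x i| ≤ Fintype.card ι * ZLattice.covolume L ^ (1 / Fintype.card ι : ℝ) := by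
  set d := ZLattice.covolume L ^ (1 / Fintype.card ι : ℝ) with hd
  have hd0 : 0 ≤ d := Real.rpow_nonneg (ZLattice.covolume_pos L).le _
  obtain ⟨F, hF, hvolF⟩ := exists_isAddFundamentalDomain_measure_eq_covolume L volume
  have : Countable L.toAddSubgroup := inferInstanceAs (Countable L)
  obtain ⟨⟨x, hxL⟩, hx0, hx⟩ := exists_ne_zero_mem_lattice_of_measure_mul_two_pow_le_measure
    (L := L.toAddSubgroup) (s := Metric.closedBall (0 : ι → ℝ) d) hF
    (fun x hx => by simpa using hx) (convex_closedBall 0 d) (isCompact_closedBall 0 d) (by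
      rw [hvolF, Real.volume_pi_closedBall _ hd0, Module.finrank_fintype_fun_eq_card, mul_pow, hd,
        covolume_rpow_one_div_card_pow, mul_comm, ENNReal.ofReal_mul (by positivity),
        ENNReal.ofReal_pow zero_le_two, ENNReal.ofReal_ofNat])
  refine ⟨x, hxL, fun h => hx0 (Subtype.ext h), ?_⟩
  rw [← nsmul_eq_mul]
  refine Finset.sum_le_card_nsmul _ _ _ fun i _ => ?_
  exact (norm_le_pi_norm x i).trans (mem_closedBall_zero_iff.1 hx)

lemma exists_ne_zero_mem_sum_abs_le_of_lt_volume {s A : ℝ} (hs : 0 < s) {M : ℕ} (hM : 0 < M)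
    (hvol : ENNReal.ofReal (M * ZLattice.covolume L) < ENNReal.ofReal (s ^ Fintype.card ι) *
      volume {x : ι → ℝ | ∑ i, logisticPotential (x i) ≤ A}) :
    ∃ x ∈ L, x ≠ 0 ∧ M * ∑ i, |x i| ≤ 2 * s * (M + 1) * (A - Fintype.card ι) := by
  set S := {x : ι → ℝ | ∑ i, logisticPotential (x i) ≤ A}
  have hS : MeasurableSet S := by
    have := continuous_logisticPotential.measurable
    exact measurableSet_le (by fun_prop) measurable_const
  have hscale : volume (s • S) = ENNReal.ofReal (s ^ Fintype.card ι) * volume S := by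
    rw [Measure.addHaar_smul, Module.finrank_fintype_fun_eq_card, abs_of_pos (pow_pos hs _)]
  obtain ⟨z, T, hT, hTS⟩ := exists_finset_lattice_card_eq_add_mem L volume
    (hS.const_smul_of_ne_zero hs.ne') (hscale ▸ hvol)
  obtain ⟨v, -, w, -, hne, hle⟩ := exists_ne_sum_abs_sub_le_of_logisticPotential_le (by lia)
    (fun v : L => s⁻¹ • ((v : ι → ℝ) + z)) fun v hv =>
      mem_ofPred.1 ((mem_smul_set_iff_inv_smul_mem₀ hs.ne' S _).1 (hTS v hv))
  refine ⟨v - w, L.sub_mem v.2 w.2, sub_ne_zero.2 (Subtype.coe_injective.ne hne), ?_⟩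
  have hdilate : ∑ i, |(s⁻¹ • ((v : ι → ℝ) + z)) i - (s⁻¹ • ((w : ι → ℝ) + z)) i| =
      s⁻¹ * ∑ i, |((v : ι → ℝ) - w) i| := by
    simp [← mul_sub, abs_mul, abs_of_pos hs, Finset.mul_sum]
  rw [hdilate, hT] at hle
  push_cast at hle
  have hscaled := mul_le_mul_of_nonneg_left hle hs.le
  field_simp at hscaled ⊢
  linarith

lemma exists_ne_zero_mem_sum_abs_le_of_lt_exp [Nonempty ι] {s ε : ℝ} (hs : 0 < s) (hε : 0 < ε)
    {M : ℕ} (hM : 0 < M) (hcard : 2 * Var[logisticPotential; logisticMeasure] ≤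
      Fintype.card ι * ε ^ 2)
    (hcovol : M * ZLattice.covolume L < (s * Real.exp (2 - ε)) ^ Fintype.card ι / 2) :
    ∃ x ∈ L, x ≠ 0 ∧ M * ∑ i, |x i| ≤ 2 * s * (M + 1) * (Fintype.card ι * (1 + ε)) := by
  obtain ⟨x, hxL, hx0, hx⟩ := exists_ne_zero_mem_sum_abs_le_of_lt_volume L
    (A := Fintype.card ι * (2 + ε)) hs hM <| calc
    ENNReal.ofReal (M * ZLattice.covolume L)
      < ENNReal.ofReal ((s * Real.exp (2 - ε)) ^ Fintype.card ι / 2) :=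
        (ENNReal.ofReal_lt_ofReal_iff (by positivity)).2 hcovol
    _ = ENNReal.ofReal (s ^ Fintype.card ι) *
          ENNReal.ofReal (Real.exp (Fintype.card ι * (2 - ε)) / 2) := by
        rw [← ENNReal.ofReal_mul (by positivity), mul_pow, ← Real.exp_nat_mul, mul_div_assoc]
    _ ≤ ENNReal.ofReal (s ^ Fintype.card ι) *
          volume {x : ι → ℝ | ∑ i, logisticPotential (x i) ≤ Fintype.card ι * (2 + ε)} := by
        gcongr
        exact half_exp_le_volume_sum_logisticPotential_le hε hcard
  exact ⟨x, hxL, hx0, hx.trans_eq (by ring)⟩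

end Pi

lemma exists_pos_two_mul_mul_sq_lt_exp {κ : ℝ} (hκ : κ < Real.exp 2 / 2) :
    ∃ ε > 0, 2 * κ * (1 + ε) ^ 2 < Real.exp (2 - ε) := by
  have hleft : Tendsto (fun ε : ℝ => 2 * κ * (1 + ε) ^ 2) (𝓝 0) (𝓝 (2 * κ)) :=
    Continuous.tendsto' (by fun_prop) _ _ (by simp)
  have hright : Tendsto (fun ε : ℝ => Real.exp (2 - ε)) (𝓝 0) (𝓝 (Real.exp 2)) :=
    Continuous.tendsto' (by fun_prop) _ _ (by simp)
  have hlt := hleft.eventually_lt hright (by linarith)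
  exact ((eventually_mem_nhdsWithin (a := (0 : ℝ)) (s := Ioi 0)).and
    (eventually_nhdsWithin_of_eventually_nhds hlt)).exists

theorem exists_forall_le_card_exists_ne_zero_mem_sum_abs_le {κ : ℝ} (hκ0 : 0 < κ)
    (hκ : κ < Real.exp 2 / 2) :
    ∃ N : ℕ, ∀ (ι : Type*) [Fintype ι] [Nonempty ι] (L : Submodule ℤ (ι → ℝ)) [DiscreteTopology L]
      [IsZLattice ℝ L], N ≤ Fintype.card ι → ∃ x ∈ L, x ≠ 0 ∧
        ∑ i, |x i| ≤ Fintype.card ι / κ * ZLattice.covolume L ^ (1 / Fintype.card ι : ℝ) := by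
  obtain ⟨ε, hε, hκε⟩ := exists_pos_two_mul_mul_sq_lt_exp hκ
  obtain ⟨M, hM⟩ := exists_nat_gt (1 / ε)
  have hM0 : 0 < M := Nat.cast_pos.1 ((one_div_pos.2 hε).trans hM)
  set r := 2 * κ * (1 + ε) ^ 2
  have hr : 0 < r := by positivity
  have hpow : ∀ᶠ n : ℕ in atTop, 2 * (M : ℝ) < (Real.exp (2 - ε) / r) ^ n :=
    (tendsto_pow_atTop_atTop_of_one_lt ((one_lt_div hr).2 hκε)).eventually_gt_atTop _
  have hvar : ∀ᶠ n : ℕ in atTop, 2 * Var[logisticPotential; logisticMeasure] ≤ n * ε ^ 2 :=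
    (tendsto_natCast_atTop_atTop.atTop_mul_const (by positivity)).eventually_ge_atTop _
  obtain ⟨N, hN⟩ := eventually_atTop.1 (hpow.and hvar)
  refine ⟨N, fun ι _ _ L _ _ hcard => ?_⟩
  obtain ⟨hpowι, hvarι⟩ := hN _ hcard
  set d := ZLattice.covolume L ^ (1 / Fintype.card ι : ℝ) with hd
  have hd0 : 0 < d := Real.rpow_pos_of_pos (ZLattice.covolume_pos L volume) _
  obtain ⟨x, hxL, hx0, hx⟩ := exists_ne_zero_mem_sum_abs_le_of_lt_exp L (div_pos hd0 hr) hε hM0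
    hvarι <| by
      rw [div_mul_comm, mul_pow, hd, covolume_rpow_one_div_card_pow]
      linarith [mul_lt_mul_of_pos_right hpowι (ZLattice.covolume_pos L volume)]
  refine ⟨x, hxL, hx0, le_of_mul_le_mul_left (hx.trans ?_) (Nat.cast_pos (α := ℝ).2 hM0)⟩
  calc
    2 * (d / r) * (M + 1) * (Fintype.card ι * (1 + ε))
      ≤ 2 * (d / r) * (M + M * ε) * (Fintype.card ι * (1 + ε)) := by
        gcongr
        exact ((div_lt_iff₀ hε).1 hM).le
    _ = M * (Fintype.card ι / κ * d) := by
        simp only [r]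
        field_simp

theorem rankin_linear_l1_bound_general {κ : ℝ} (hκ0 : 0 < κ) (hκ : κ < Real.exp 2 / 2) :
    ∃ C : ℝ, 0 ≤ C ∧ ∀ (ι : Type*) [Fintype ι] [Nonempty ι] (L : Submodule ℤ (ι → ℝ))
      [DiscreteTopology L] [IsZLattice ℝ L], ∃ x ∈ L, x ≠ 0 ∧
        ∑ i, |x i| ≤ (Fintype.card ι / κ + C) *
          ZLattice.covolume L ^ (1 / Fintype.card ι : ℝ) := by
  obtain ⟨N, hN⟩ := exists_forall_le_card_exists_ne_zero_mem_sum_abs_le hκ0 hκ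
  refine ⟨N, N.cast_nonneg, fun ι _ _ L _ _ => ?_⟩
  have hd0 := Real.rpow_nonneg (ZLattice.covolume_pos L volume).le (1 / Fintype.card ι : ℝ)
  rcases le_total N (Fintype.card ι) with hcard | hcard
  · obtain ⟨x, hxL, hx0, hx⟩ := hN ι L hcard
    refine ⟨x, hxL, hx0, hx.trans ?_⟩
    gcongr
    exact le_add_of_nonneg_right N.cast_nonneg
  · obtain ⟨x, hxL, hx0, hx⟩ := exists_ne_zero_mem_sum_abs_le_card_mul_covolume L
    refine ⟨x, hxL, hx0, hx.trans ?_⟩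
    gcongr
    exact le_add_of_nonneg_of_le (by positivity) (mod_cast hcard)

lemma exists_basis_coe_eq_of_det_ne_zero {ι K : Type*} [Fintype ι] [DecidableEq ι] [Field K]
    {b : ι → ι → K} (hb : (Matrix.of b).det ≠ 0) : ∃ B : Module.Basis ι K (ι → K), ⇑B = b := by
  have hlin : LinearIndependent K b := Matrix.linearIndependent_rows_of_det_ne_zero hb
  cases isEmpty_or_nonempty ι
  · exact ⟨.empty _, Subsingleton.elim _ _⟩
  · exact ⟨_, coe_basisOfLinearIndependentOfCardEqFinrank hlin (by simp)⟩

lemma covolume_span_range_basis {ι : Type*} [Fintype ι] [DecidableEq ι]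
    (b : Module.Basis ι ℝ (ι → ℝ)) :
    ZLattice.covolume (Submodule.span ℤ (range b)) = |(Matrix.of b).det| := by
  rw [ZLattice.covolume_eq_det _ (b.restrictScalars ℤ)]
  congr 3
  ext i : 1
  simp

lemma le_div_log_two_mul_log_natCast_add_one {C : ℝ} (hC : 0 ≤ C) {n : ℕ} (hn : 1 ≤ n) :
    C ≤ C / Real.log 2 * Real.log (n + 1) := by
  have hlog : Real.log 2 ≤ Real.log (n + 1) :=
    Real.log_le_log two_pos (by linarith [Nat.one_le_cast (α := ℝ).2 hn])
  rw [div_mul_eq_mul_div, le_div_iff₀ (Real.log_pos one_lt_two)]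
  gcongr

lemma linear_constant_lt_exp_two_div_two : (3.659 : ℝ) < Real.exp 2 / 2 := by
  have hexp : Real.exp 2 = Real.exp 1 ^ 2 := by rw [← Real.exp_nat_mul]; norm_num
  nlinarith [Real.exp_one_gt_d9]

/-- There is a constant `C ≥ 0` such that for every `n ≥ 1`, every full-rank
lattice in `ℝⁿ` (the ℤ-span of an ℝ-basis, given by the rows `b` of a matrix
with nonzero determinant, whose covolume is `|det b|`) contains a nonzero
vector `x` with `‖x‖₁ ≤ (n/3.659 + C·log(n+1)) · det(L)^(1/n)`. -/
theorem rankin_linear_l1_bound :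
    ∃ C : ℝ, 0 ≤ C ∧ ∀ n : ℕ, 1 ≤ n → ∀ b : Fin n → Fin n → ℝ, (Matrix.of b).det ≠ 0 →
      ∃ x ∈ Submodule.span ℤ (Set.range b), x ≠ 0 ∧
        ∑ i, |x i| ≤ ((n : ℝ) / 3.659 + C * Real.log ((n : ℝ) + 1)) *
          |(Matrix.of b).det| ^ ((1 : ℝ) / n) := by
  obtain ⟨C, hC, h⟩ :=
    rankin_linear_l1_bound_general (by norm_num) linear_constant_lt_exp_two_div_two
  refine ⟨C / Real.log 2, by positivity, fun n hn b hb => ?_⟩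
  have : NeZero n := ⟨by lia⟩
  obtain ⟨B, rfl⟩ := exists_basis_coe_eq_of_det_ne_zero hb
  obtain ⟨x, hxL, hx0, hx⟩ := h (Fin n) (Submodule.span ℤ (range B))
  rw [covolume_span_range_basis, Fintype.card_fin] at hx
  refine ⟨x, hxL, hx0, hx.trans ?_⟩
  gcongr
  exact le_div_log_two_mul_log_natCast_add_one hC hn
end

section
/- Let f(x) = ((1−x)/(2−x))^{x−1}·(e/x)^x·Γ(x+1) for x ∈ [1/2, 1]. Then f(x) < 3.6594 for all x ∈ [1/2, 1], and there exists x ∈ [1/2, 1] with f(x) > 3.6593. -/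
/-!
Let `f` be the function to be bounded. On `(0, 1]`,
`log (f x) = binEntropy x + (1 - x) * log (2 - x) + x + log (Γ (x + 1))`.
The first summand has second derivative at most `-4`, which outweighs the convexity of the others,
so `log ∘ f` is concave and is bounded above by any of its tangents. At `71 / 110`, close to the
maximiser, the tangent is almost horizontal and the value of `f` exceeds `3.6593`.

To keep everything computable, `log ∘ Γ` is replaced by Stirling's approximation at a point shifted
by `5`. Its error is controlled by `1 / (12 z) - 1 / (360 z ^ 3) ≤ μ z ≤ 1 / (12 z)` for Binet's
function `μ`, which follow by telescoping from the artanh series of `μ z - μ (z + 1)`.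
Logarithms of rationals are estimated by the artanh series as well, after division by a power of
two.
-/

section

open Filter Finset Real Topology

/-! ### Numerical logarithms -/

theorem abs_log_sub_artanh_sum_le {q : ℝ} (hq : 0 < q) (k : ℤ) (n : ℕ) :
    |log q - (k * log 2 +
        2 * ∑ i ∈ range n, ((q - 2 ^ k) / (q + 2 ^ k)) ^ (2 * i + 1) / (2 * i + 1))| ≤
      2 * (|(q - 2 ^ k) / (q + 2 ^ k)| ^ (2 * n + 1) / (1 - ((q - 2 ^ k) / (q + 2 ^ k)) ^ 2)) := by
  have hk : (0 : ℝ) < 2 ^ k := by positivity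
  set t := (q - 2 ^ k) / (q + 2 ^ k) with ht
  have ht_lt : |t| < 1 := by
    rw [ht, abs_div, abs_of_pos (add_pos hq hk), div_lt_one (add_pos hq hk), abs_lt]
    constructor <;> linarith
  have ht_ratio : (1 + t) / (1 - t) = q / 2 ^ k := by
    rw [ht]
    field_simp
    ring
  have h_series := sum_range_sub_log_div_le ht_lt n
  rw [ht_ratio, log_div hq.ne' hk.ne', log_zpow] at h_series
  calc
    _ = 2 * |1 / 2 * (log q - k * log 2) - ∑ i ∈ range n, t ^ (2 * i + 1) / (2 * i + 1)| := by
        rw [← abs_two, ← abs_mul, abs_two]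
        ring_nf
    _ ≤ _ := by gcongr

-- `287209 / 414355` is the rational approximation of `log 2` in `log_two_near_10`.
theorem abs_log_sub_le {q c ε : ℝ} (hq : 0 < q) (k : ℤ) (n : ℕ)
    (h : |k * (287209 / 414355) +
          2 * ∑ i ∈ range n, ((q - 2 ^ k) / (q + 2 ^ k)) ^ (2 * i + 1) / (2 * i + 1) - c| +
        |(k : ℝ)| / 10 ^ 10 +
        2 * (|(q - 2 ^ k) / (q + 2 ^ k)| ^ (2 * n + 1) / (1 - ((q - 2 ^ k) / (q + 2 ^ k)) ^ 2))
      ≤ ε) :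
    |log q - c| ≤ ε := by
  have h_series := abs_log_sub_artanh_sum_le hq k n
  have h_two : |k * log 2 - k * (287209 / 414355)| ≤ |(k : ℝ)| / 10 ^ 10 := by
    rw [← mul_sub, abs_mul, div_eq_mul_one_div |(k : ℝ)|]
    exact mul_le_mul_of_nonneg_left log_two_near_10 (abs_nonneg _)
  grind

/-! ### Binet's function -/

theorem le_of_forall_sub_succ_le {u v : ℕ → ℝ} (h : ∀ n, u n - u (n + 1) ≤ v n - v (n + 1))
    (hu : Tendsto u atTop (𝓝 0)) (hv : Tendsto v atTop (𝓝 0)) : u 0 ≤ v 0 := by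
  have h_mono : Monotone (u - v) := monotone_nat_of_le_succ fun n ↦ by
    simp only [Pi.sub_apply]
    linarith [h n]
  have h_lim : Tendsto (u - v) atTop (𝓝 0) := by
    rw [← sub_zero 0]
    exact hu.sub hv
  exact sub_nonpos.mp (h_mono.ge_of_tendsto h_lim 0)

/-- Binet's function: the error `μ z` of Stirling's formula
`log (Γ z) = (z - 1/2) log z - z + log (2π) / 2 + μ z`, `0 < z`. -/
noncomputable def binetRemainder (z : ℝ) : ℝ :=
  log (Gamma z) - ((z - 1 / 2) * log z - z + log (2 * π) / 2)

theorem log_Gamma_add_one {z : ℝ} (hz : 0 < z) :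
    log (Gamma (z + 1)) = log (Gamma z) + log z := by
  rw [Gamma_add_one hz.ne', log_mul hz.ne' (Gamma_pos_of_pos hz).ne', add_comm]

theorem log_Gamma_add_nat {z : ℝ} (hz : 0 < z) (n : ℕ) :
    log (Gamma (z + n)) = log (Gamma z) + ∑ k ∈ range n, log (z + k) :=
  BohrMollerup.f_add_nat_eq (f := log ∘ Gamma) log_Gamma_add_one hz n

theorem hasSum_binetRemainder_sub {z : ℝ} (hz : 0 < z) :
    HasSum (fun k : ℕ ↦ (1 / (2 * z + 1) ^ 2) ^ (k + 1) / (2 * (k + 1) + 1))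
      (binetRemainder z - binetRemainder (z + 1)) := by
  have h_series := (hasSum_log_one_add_inv hz).mul_left (z + 1 / 2)
  have h_log : log (1 + z⁻¹) = log (z + 1) - log z := by
    rw [← log_div (by positivity) hz.ne']
    congr 1
    field
  rw [← hasSum_nat_add_iff' 1] at h_series
  convert! h_series using 1
  · ext k
    have h_pow : (1 / (2 * z + 1) ^ 2) ^ (k + 1) = (1 / (2 * z + 1)) ^ (2 * (k + 1)) := by
      rw [pow_mul, one_div_pow (2 * z + 1) 2]
    rw [pow_succ _ (2 * (k + 1)), h_pow]
    push_cast
    field_simp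
  · rw [sum_range_one, binetRemainder, binetRemainder, log_Gamma_add_one hz, h_log, Nat.cast_zero,
      mul_zero, zero_add, pow_one]
    field_simp
    ring

theorem binetRemainder_sub_add_one_le {z : ℝ} (hz : 0 < z) :
    binetRemainder z - binetRemainder (z + 1) ≤ 1 / (12 * z) - 1 / (12 * (z + 1)) := by
  set u := 1 / (2 * z + 1) ^ 2 with hu
  have hu_nonneg : 0 ≤ u := by positivity
  have hu_lt_one : u < 1 := by
    rw [hu, div_lt_one (by positivity)]
    nlinarith
  have h_geom := (hasSum_geometric_of_lt_one hu_nonneg hu_lt_one).mul_left (u / 3)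
  have h_term (k : ℕ) : u ^ (k + 1) / (2 * (k + 1) + 1) ≤ u / 3 * u ^ k := by
    rw [pow_succ', mul_div_right_comm]
    gcongr
    linarith [k.cast_nonneg (α := ℝ)]
  have h_one_sub : 1 - u = 4 * z * (z + 1) / (2 * z + 1) ^ 2 := by
    rw [hu]
    field_simp
    ring
  calc binetRemainder z - binetRemainder (z + 1) ≤ u / 3 * (1 - u)⁻¹ :=
        hasSum_le h_term (hasSum_binetRemainder_sub hz) h_geom
    _ = 1 / (12 * z) - 1 / (12 * (z + 1)) := by
        rw [h_one_sub, hu]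
        field_simp
        ring

theorem le_binetRemainder_sub_add_one {z : ℝ} (hz : 0 < z) :
    1 / (12 * z) - 1 / (360 * z ^ 3) - (1 / (12 * (z + 1)) - 1 / (360 * (z + 1) ^ 3)) ≤
      binetRemainder z - binetRemainder (z + 1) := by
  have h_gap : 1 / (3 * (2 * z + 1) ^ 2) + 1 / (5 * (2 * z + 1) ^ 4) -
      (1 / (12 * z) - 1 / (360 * z ^ 3) - (1 / (12 * (z + 1)) - 1 / (360 * (z + 1) ^ 3))) =
      (1 + 11 * (z * (z + 1)) + 10 * (z * (z + 1)) ^ 2) /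
        (360 * (z * (z + 1)) ^ 3 * (2 * z + 1) ^ 4) := by
    field_simp
    ring
  calc
    _ ≤ 1 / (3 * (2 * z + 1) ^ 2) + 1 / (5 * (2 * z + 1) ^ 4) := by
        rw [← sub_nonneg, h_gap]
        positivity
    _ = ∑ k ∈ range 2, (1 / (2 * z + 1) ^ 2) ^ (k + 1) / (2 * (k + 1) + 1) := by
        norm_num [sum_range_succ]
        field_simp
    _ ≤ _ := sum_le_hasSum _ (fun k _ ↦ by positivity) (hasSum_binetRemainder_sub hz)

theorem tendsto_add_mul_log_one_add_div (a c : ℝ) :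
    Tendsto (fun x ↦ (x + a) * log (1 + c / x)) atTop (𝓝 c) := by
  have h_log : Tendsto (fun x ↦ log (1 + c / x)) atTop (𝓝 0) := by
    simpa using ((tendsto_const_nhds (x := c)).div_atTop tendsto_id).const_add 1 |>.log (by simp)
  simpa [add_mul] using (tendsto_mul_log_one_add_div_atTop c).add (h_log.const_mul a)

theorem binetRemainder_add_nat_add_one {z : ℝ} (hz : 0 < z) {n : ℕ} (hn : n ≠ 0) :
    binetRemainder (z + n + 1) =
      (log (Gamma z) - BohrMollerup.logGammaSeq z n) +
        (log (Stirling.stirlingSeq n) - log √π) +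
        (z + 1 - (n + (z + 1 / 2)) * log (1 + (z + 1) / n)) := by
  have hn' : (0 : ℝ) < n := by positivity
  have h_log : log (1 + (z + 1) / n) = log (z + n + 1) - log n := by
    rw [← log_div (by positivity) hn'.ne']
    congr 1
    field_simp
    ring
  have h_Gamma := log_Gamma_add_nat hz (n + 1)
  push_cast [← add_assoc] at h_Gamma
  rw [binetRemainder, h_Gamma, BohrMollerup.logGammaSeq, Stirling.log_stirlingSeq_formula, h_log,
    log_sqrt pi_pos.le, log_mul two_ne_zero pi_ne_zero, log_mul two_ne_zero hn'.ne',
    log_div hn'.ne' (exp_ne_zero 1), log_exp]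
  ring

theorem tendsto_binetRemainder_add_nat {z : ℝ} (hz : 0 < z) :
    Tendsto (fun n : ℕ ↦ binetRemainder (z + n)) atTop (𝓝 0) := by
  have h_Gamma := (BohrMollerup.tendsto_log_gamma hz).const_sub (log (Gamma z))
  have h_factorial := (Stirling.tendsto_stirlingSeq_sqrt_pi.log (by positivity)).sub_const (log √π)
  have h_shift := ((tendsto_add_mul_log_one_add_div (z + 1 / 2) (z + 1)).comp
    tendsto_natCast_atTop_atTop).const_sub (z + 1)
  rw [← tendsto_add_atTop_iff_nat 1]
  have h_lim := (h_Gamma.add h_factorial).add h_shift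
  simp only [sub_self, add_zero] at h_lim
  refine h_lim.congr' ?_
  filter_upwards [eventually_ne_atTop 0] with n hn
  simp [← add_assoc, binetRemainder_add_nat_add_one hz hn]

theorem tendsto_one_div_const_mul_add_nat_pow {a : ℝ} (ha : 0 < a) (z : ℝ) {m : ℕ} (hm : m ≠ 0) :
    Tendsto (fun n : ℕ ↦ 1 / (a * (z + n) ^ m)) atTop (𝓝 0) := by
  have h_atTop : Tendsto (fun n : ℕ ↦ a * (z + n) ^ m) atTop atTop :=
    (((tendsto_pow_atTop hm).comp
      (tendsto_atTop_add_const_left _ z tendsto_natCast_atTop_atTop)).const_mul_atTop ha)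
  exact tendsto_const_nhds.div_atTop h_atTop

theorem binetRemainder_le {z : ℝ} (hz : 0 < z) : binetRemainder z ≤ 1 / (12 * z) := by
  have h_lim := tendsto_one_div_const_mul_add_nat_pow (a := 12) (by norm_num) z one_ne_zero
  have h_step (n : ℕ) := binetRemainder_sub_add_one_le (z := z + n) (by positivity)
  simpa using le_of_forall_sub_succ_le (u := fun n ↦ binetRemainder (z + n))
    (by simpa [add_assoc] using h_step) (tendsto_binetRemainder_add_nat hz) h_lim

theorem le_binetRemainder {z : ℝ} (hz : 0 < z) :
    1 / (12 * z) - 1 / (360 * z ^ 3) ≤ binetRemainder z := by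
  have h_lim := (tendsto_one_div_const_mul_add_nat_pow (a := 12) (by norm_num) z one_ne_zero).sub
    (tendsto_one_div_const_mul_add_nat_pow (a := 360) (by norm_num) z three_ne_zero)
  rw [sub_zero] at h_lim
  have h_step (n : ℕ) := le_binetRemainder_sub_add_one (z := z + n) (by positivity)
  simpa using le_of_forall_sub_succ_le (v := fun n ↦ binetRemainder (z + n))
    (by simpa [add_assoc] using h_step) h_lim (tendsto_binetRemainder_add_nat hz)

/-! ### Shifted Stirling approximation -/

/-- Stirling's approximation of `log ∘ Gamma` with its `1 / (12 z)` correction, applied at `z + n`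
and carried back to `z` by the functional equation; the error decreases as `n` grows. -/
noncomputable def stirlingLogGamma (n : ℕ) (z : ℝ) : ℝ :=
  (z + n - 1 / 2) * log (z + n) - (z + n) + log (2 * π) / 2 + 1 / (12 * (z + n)) -
    ∑ k ∈ range n, log (z + k)

/-- The derivative of `stirlingLogGamma n`, an approximation of the digamma function. -/
noncomputable def stirlingDigamma (n : ℕ) (z : ℝ) : ℝ :=
  log (z + n) - 1 / (2 * (z + n)) - 1 / (12 * (z + n) ^ 2) - ∑ k ∈ range n, 1 / (z + k)

/-- The second derivative of `stirlingLogGamma n`, an approximation of the trigamma function. -/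
noncomputable def stirlingTrigamma (n : ℕ) (z : ℝ) : ℝ :=
  1 / (z + n) + 1 / (2 * (z + n) ^ 2) + 1 / (6 * (z + n) ^ 3) + ∑ k ∈ range n, 1 / (z + k) ^ 2

theorem log_Gamma_eq_stirlingLogGamma_add {z : ℝ} (hz : 0 < z) (n : ℕ) :
    log (Gamma z) = stirlingLogGamma n z + (binetRemainder (z + n) - 1 / (12 * (z + n))) := by
  rw [stirlingLogGamma, binetRemainder, log_Gamma_add_nat hz]
  ring

theorem log_Gamma_le_stirlingLogGamma {z : ℝ} (hz : 0 < z) (n : ℕ) :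
    log (Gamma z) ≤ stirlingLogGamma n z := by
  linarith [log_Gamma_eq_stirlingLogGamma_add hz n, binetRemainder_le (z := z + n) (by positivity)]

theorem stirlingLogGamma_sub_le_log_Gamma {z : ℝ} (hz : 0 < z) (n : ℕ) :
    stirlingLogGamma n z - 1 / (360 * (z + n) ^ 3) ≤ log (Gamma z) := by
  linarith [log_Gamma_eq_stirlingLogGamma_add hz n, le_binetRemainder (z := z + n) (by positivity)]

theorem hasDerivAt_stirlingLogGamma {z : ℝ} (hz : 0 < z) (n : ℕ) :
    HasDerivAt (stirlingLogGamma n) (stirlingDigamma n z) z := by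
  have hzn : z + n ≠ 0 := by positivity
  have h_shift (c : ℝ) : HasDerivAt (fun y ↦ y + c) 1 z := (hasDerivAt_id z).add_const c
  have h_sum : HasDerivAt (fun y ↦ ∑ k ∈ range n, log (y + k)) (∑ k ∈ range n, 1 / (z + k)) z :=
    HasDerivAt.fun_sum fun k _ ↦ (h_shift k).log (by positivity)
  have h_main := ((h_shift n).sub_const (1 / 2)).mul ((h_shift n).log hzn)
  have h_inv := ((h_shift n).const_mul 12).inv (by positivity)
  convert! (((h_main.sub (h_shift n)).add_const (log (2 * π) / 2)).add h_inv).sub h_sum using 1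
  · ext y
    simp [stirlingLogGamma]
  · rw [stirlingDigamma]
    field

theorem hasDerivAt_stirlingDigamma {z : ℝ} (hz : 0 < z) (n : ℕ) :
    HasDerivAt (stirlingDigamma n) (stirlingTrigamma n z) z := by
  have hzn : z + n ≠ 0 := by positivity
  have h_shift (c : ℝ) : HasDerivAt (fun y ↦ y + c) 1 z := (hasDerivAt_id z).add_const c
  have h_sum : HasDerivAt (fun y : ℝ ↦ ∑ k ∈ range n, (y + (k : ℝ))⁻¹)
      (∑ k ∈ range n, -1 / (z + k) ^ 2) z :=
    HasDerivAt.fun_sum fun k _ ↦ (h_shift k).inv (by positivity)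
  have h_inv := ((h_shift n).const_mul 2).inv (by positivity)
  have h_inv_sq := (((h_shift n).fun_pow 2).const_mul 12).inv (by positivity)
  convert! ((((h_shift n).log hzn).sub h_inv).sub h_inv_sq).sub h_sum using 1
  · ext y
    simp [stirlingDigamma]
  · simp only [stirlingTrigamma, neg_div, sum_neg_distrib]
    field

theorem stirlingTrigamma_sub_succ {z : ℝ} (hz : 0 < z) (n : ℕ) :
    stirlingTrigamma n z - stirlingTrigamma (n + 1) z = 1 / (6 * ((z + n) * (z + n + 1)) ^ 3) := by
  rw [stirlingTrigamma, stirlingTrigamma, sum_range_succ, Nat.cast_add_one, ← add_assoc]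
  have : 0 < z + n := by positivity
  field_simp
  ring

theorem stirlingTrigamma_le {z : ℝ} (hz : 0 < z) (n : ℕ) :
    stirlingTrigamma n z ≤ 1 / z + 1 / (2 * z ^ 2) + 1 / (6 * z ^ 3) := by
  have h_antitone : Antitone (stirlingTrigamma · z) := antitone_nat_of_succ_le fun n ↦ by
    rw [← sub_nonneg, stirlingTrigamma_sub_succ hz]
    positivity
  simpa [stirlingTrigamma] using h_antitone n.zero_le

/-! ### The concave majorant -/

theorem le_tangent_of_concaveOn {s : Set ℝ} {f : ℝ → ℝ} {f' x y : ℝ} (hf : ConcaveOn ℝ s f)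
    (hx : x ∈ s) (hy : y ∈ s) (hf' : HasDerivAt f f' x) : f y ≤ f x + f' * (y - x) := by
  rcases lt_trichotomy x y with hxy | rfl | hyx
  · have h_slope := hf.slope_le_of_hasDerivAt hx hy hxy hf'
    rw [slope_def_field, div_le_iff₀ (sub_pos.mpr hxy)] at h_slope
    linarith
  · simp
  · have h_slope := hf.le_slope_of_hasDerivAt hy hx hyx hf'
    rw [slope_def_field, le_div_iff₀ (sub_pos.mpr hyx)] at h_slope
    linarith

/-- The logarithm of `((1 - x) / (2 - x)) ^ (x - 1) * (e / x) ^ x * Γ(x + 1)` on `(0, 1]`, with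
`log (Γ (x + 1))` replaced by the upper bound `stirlingLogGamma n (x + 1)`. -/
noncomputable def rankinMajorant (n : ℕ) (x : ℝ) : ℝ :=
  binEntropy x + (1 - x) * log (2 - x) + x + stirlingLogGamma n (x + 1)

/-- The derivative of `rankinMajorant n` on `(0, 1)`. -/
noncomputable def rankinMajorantDeriv (n : ℕ) (x : ℝ) : ℝ :=
  log (1 - x) - log x - log (2 - x) + 1 / (2 - x) + stirlingDigamma n (x + 1)

/-- The second derivative of `rankinMajorant n` on `(0, 1)`. -/
noncomputable def rankinMajorantDeriv2 (n : ℕ) (x : ℝ) : ℝ :=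
  -1 / (x * (1 - x)) + 1 / (2 - x) + 1 / (2 - x) ^ 2 + stirlingTrigamma n (x + 1)

theorem hasDerivAt_rankinMajorant {x : ℝ} (hx : x ∈ Set.Ioo 0 1) (n : ℕ) :
    HasDerivAt (rankinMajorant n) (rankinMajorantDeriv n x) x := by
  have hx₂ : 2 - x ≠ 0 := by linarith [hx.2]
  have h_sub (c : ℝ) : HasDerivAt (fun y ↦ c - y) (-1) x := (hasDerivAt_id x).const_sub c
  have h_log := (h_sub 1).mul ((h_sub 2).log hx₂)
  have h_Gamma := (hasDerivAt_stirlingLogGamma (z := x + 1) (by linarith [hx.1]) n).comp_add_const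
  convert! (((hasDerivAt_binEntropy hx.1.ne' hx.2.ne).add h_log).add (hasDerivAt_id x)).add
    h_Gamma using 1
  rw [rankinMajorantDeriv]
  field

theorem hasDerivAt_rankinMajorantDeriv {x : ℝ} (hx : x ∈ Set.Ioo 0 1) (n : ℕ) :
    HasDerivAt (rankinMajorantDeriv n) (rankinMajorantDeriv2 n x) x := by
  have hx₁ : 1 - x ≠ 0 := by linarith [hx.2]
  have hx₂ : 2 - x ≠ 0 := by linarith [hx.2]
  have hx₀ : x ≠ 0 := hx.1.ne'
  have h_sub (c : ℝ) : HasDerivAt (fun y ↦ c - y) (-1) x := (hasDerivAt_id x).const_sub c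
  have h_Gamma := (hasDerivAt_stirlingDigamma (z := x + 1) (by linarith [hx.1]) n).comp_add_const
  convert! (((((h_sub 1).log hx₁).sub (hasDerivAt_log hx₀)).sub ((h_sub 2).log hx₂)).add
    ((h_sub 2).inv hx₂)).add h_Gamma using 1
  · ext y
    simp [rankinMajorantDeriv]
  · rw [rankinMajorantDeriv2]
    field

theorem rankinMajorantDeriv2_nonpos {x : ℝ} (hx : x ∈ Set.Ioo 0 1) (n : ℕ) :
    rankinMajorantDeriv2 n x ≤ 0 := by
  obtain ⟨hx₀, hx₁⟩ := hx
  have h_entropy : -1 / (x * (1 - x)) ≤ -4 := by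
    rw [div_le_iff₀ (mul_pos hx₀ (sub_pos.mpr hx₁))]
    nlinarith [sq_nonneg (2 * x - 1)]
  have h_inv : 1 / (2 - x) ≤ 1 := by
    rw [div_le_one (by linarith)]
    linarith
  have h_inv_sq : 1 / (2 - x) ^ 2 ≤ 1 := by
    rw [← one_div_pow]
    exact pow_le_one₀ (one_div_nonneg.mpr (by linarith)) h_inv
  have h_trigamma : stirlingTrigamma n (x + 1) ≤ 2 := calc
    _ ≤ 1 / (x + 1) + 1 / (2 * (x + 1) ^ 2) + 1 / (6 * (x + 1) ^ 3) :=
      stirlingTrigamma_le (by linarith) n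
    _ ≤ 1 / (0 + 1) + 1 / (2 * (0 + 1) ^ 2) + 1 / (6 * (0 + 1) ^ 3) := by gcongr
    _ ≤ 2 := by norm_num
  rw [rankinMajorantDeriv2]
  linarith

theorem continuousOn_rankinMajorant (n : ℕ) :
    ContinuousOn (rankinMajorant n) (Set.Icc 0 1) := by
  have h_log : ContinuousOn (fun x : ℝ ↦ log (2 - x)) (Set.Icc 0 1) :=
    (continuousOn_const.sub continuousOn_id).log fun x hx ↦
      (by linarith [hx.2] : 0 < 2 - x).ne'
  have h_Gamma : ContinuousOn (fun x : ℝ ↦ stirlingLogGamma n (x + 1)) (Set.Icc 0 1) :=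
    fun x hx ↦ (hasDerivAt_stirlingLogGamma (by linarith [hx.1]) n).comp_add_const
      |>.continuousAt.continuousWithinAt
  unfold rankinMajorant
  fun_prop

theorem concaveOn_rankinMajorant (n : ℕ) : ConcaveOn ℝ (Set.Icc 0 1) (rankinMajorant n) := by
  refine concaveOn_of_hasDerivWithinAt2_nonpos (convex_Icc 0 1) (continuousOn_rankinMajorant n)
    (f' := rankinMajorantDeriv n) (f'' := rankinMajorantDeriv2 n) ?_ ?_ ?_ <;>
  rw [interior_Icc]
  · exact fun x hx ↦ (hasDerivAt_rankinMajorant hx n).hasDerivWithinAt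
  · exact fun x hx ↦ (hasDerivAt_rankinMajorantDeriv hx n).hasDerivWithinAt
  · exact fun x hx ↦ rankinMajorantDeriv2_nonpos hx n

/-! ### Evaluation at `71 / 110` -/

theorem abs_log_two_mul_pi_sub_le : |log (2 * π) - 1.837877| ≤ 1e-6 := by
  have h_lower : |log 6.283184 - 1.83787686| ≤ 1e-8 :=
    abs_log_sub_le (by norm_num) 3 5 (by norm_num [sum_range_succ])
  have h_upper : |log 6.283186 - 1.83787718| ≤ 1e-8 :=
    abs_log_sub_le (by norm_num) 3 5 (by norm_num [sum_range_succ])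
  have h_le : log 6.283184 ≤ log (2 * π) :=
    log_le_log (by norm_num) (by linarith [pi_gt_d6])
  have h_ge : log (2 * π) ≤ log 6.283186 :=
    log_le_log (by positivity) (by linarith [pi_lt_d6])
  rw [abs_le] at *
  constructor <;> linarith

theorem abs_log_71_div_110_sub_le : |log (71 / 110) - (-0.43780049)| ≤ 1e-8 :=
  abs_log_sub_le (by norm_num) (-1) 5 (by norm_num [sum_range_succ])

theorem abs_log_39_div_110_sub_le : |log (39 / 110) - (-1.03691872)| ≤ 1e-8 :=
  abs_log_sub_le (by norm_num) (-1) 5 (by norm_num [sum_range_succ])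

theorem abs_log_149_div_110_sub_le : |log (149 / 110) - 0.30346594| ≤ 1e-8 :=
  abs_log_sub_le (by norm_num) 0 5 (by norm_num [sum_range_succ])

theorem abs_log_731_div_110_sub_le : |log (731 / 110) - 1.89393309| ≤ 1e-8 :=
  abs_log_sub_le (by norm_num) 3 5 (by norm_num [sum_range_succ])

theorem abs_rankinMajorant_five_sub_le : |rankinMajorant 5 (71 / 110) - 1.2972852| ≤ 1e-6 := by
  have h_shift : |∑ k ∈ range 5, log (71 / 110 + 1 + k) - 6.03108057| ≤ 1e-8 := by
    rw [← log_prod fun k _ ↦ by positivity]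
    exact abs_log_sub_le (by positivity) 9 5 (by norm_num [sum_range_succ, prod_range_succ])
  have h_two_pi := abs_log_two_mul_pi_sub_le
  have h_71 := abs_log_71_div_110_sub_le
  have h_39 := abs_log_39_div_110_sub_le
  have h_149 := abs_log_149_div_110_sub_le
  have h_731 := abs_log_731_div_110_sub_le
  rw [rankinMajorant, stirlingLogGamma, binEntropy, log_inv, log_inv]
  norm_num only [Nat.cast_ofNat]
  rw [abs_le] at *
  constructor <;> linarith

theorem rankinMajorantDeriv_five_mem_Icc :
    rankinMajorantDeriv 5 (71 / 110) ∈ Set.Icc 0 3e-5 := by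
  have h_71 := abs_log_71_div_110_sub_le
  have h_39 := abs_log_39_div_110_sub_le
  have h_149 := abs_log_149_div_110_sub_le
  have h_731 := abs_log_731_div_110_sub_le
  rw [rankinMajorantDeriv, stirlingDigamma, Set.mem_Icc]
  norm_num only [sum_range_succ, range_zero, sum_empty, Nat.cast_ofNat, Nat.cast_zero,
    Nat.cast_one]
  rw [abs_le] at *
  constructor <;> linarith

theorem rankinMajorant_five_lt_log {x : ℝ} (hx : x ∈ Set.Icc 0 1) :
    rankinMajorant 5 x < log 3.6594 := by
  have hx₀ : (71 / 110 : ℝ) ∈ Set.Ioo 0 1 := by norm_num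
  have h_tangent := le_tangent_of_concaveOn (concaveOn_rankinMajorant 5)
    (Set.Ioo_subset_Icc_self hx₀) hx (hasDerivAt_rankinMajorant hx₀ 5)
  obtain ⟨h_deriv_nonneg, h_deriv_le⟩ := rankinMajorantDeriv_five_mem_Icc
  have h_value := (abs_le.mp abs_rankinMajorant_five_sub_le).2
  have h_log : |log 3.6594 - 1.2972992| ≤ 1e-8 :=
    abs_log_sub_le (by norm_num) 2 5 (by norm_num [sum_range_succ])
  have h_dist : x - 71 / 110 ≤ 39 / 110 := by linarith [hx.2]
  calc rankinMajorant 5 x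
      ≤ rankinMajorant 5 (71 / 110) + rankinMajorantDeriv 5 (71 / 110) * (x - 71 / 110) := h_tangent
    _ ≤ rankinMajorant 5 (71 / 110) + rankinMajorantDeriv 5 (71 / 110) * (39 / 110) := by gcongr
    _ ≤ 1.2972862 + 3e-5 * (39 / 110) := by
        gcongr
        linarith
    _ < log 3.6594 := by linarith [(abs_le.mp h_log).1]

theorem log_lt_rankinMajorant_five_sub :
    log 3.6593 < rankinMajorant 5 (71 / 110) - 1 / (360 * (71 / 110 + 1 + 5) ^ 3) := by
  have h_value := (abs_le.mp abs_rankinMajorant_five_sub_le).1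
  have h_log : |log 3.6593 - 1.29727187| ≤ 1e-8 :=
    abs_log_sub_le (by norm_num) 2 5 (by norm_num [sum_range_succ])
  calc log 3.6593 < 1.2972842 - 1e-5 := by linarith [(abs_le.mp h_log).2]
    _ ≤ 1.2972842 - 1 / (360 * (71 / 110 + 1 + 5) ^ 3) := by norm_num
    _ ≤ rankinMajorant 5 (71 / 110) - 1 / (360 * (71 / 110 + 1 + 5) ^ 3) := by linarith

theorem rpow_mul_rpow_mul_Gamma_eq_exp {x : ℝ} (hx₀ : 0 < x) (hx₁ : x ≤ 1) :
    ((1 - x) / (2 - x)) ^ (x - 1) * (exp 1 / x) ^ x * Gamma (x + 1) =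
      exp (binEntropy x + (1 - x) * log (2 - x) + x + log (Gamma (x + 1))) := by
  have h_Gamma : exp (log (Gamma (x + 1))) = Gamma (x + 1) :=
    exp_log (Gamma_pos_of_pos (by linarith))
  have h_exp : (exp 1 / x) ^ x = exp (x - x * log x) := by
    rw [rpow_def_of_pos (by positivity), log_div (exp_ne_zero 1) hx₀.ne', log_exp]
    ring_nf
  have h_ratio : ((1 - x) / (2 - x)) ^ (x - 1) =
      exp ((1 - x) * log (2 - x) - (1 - x) * log (1 - x)) := by
    rcases hx₁.eq_or_lt with rfl | hx₁
    · simp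
    · rw [rpow_def_of_pos (div_pos (by linarith) (by linarith)),
        log_div (by linarith) (by linarith)]
      ring_nf
  rw [h_ratio, h_exp, ← h_Gamma, ← exp_add, ← exp_add, h_Gamma, binEntropy, log_inv, log_inv]
  ring_nf

theorem rankin_constant_bounds_general :
    (∀ x ∈ Set.Ioc (0 : ℝ) 1,
      ((1 - x) / (2 - x)) ^ (x - 1) * (exp 1 / x) ^ x * Gamma (x + 1) < 3.6594) ∧
    (∃ x ∈ Set.Icc (1 / 2 : ℝ) 1,
      ((1 - x) / (2 - x)) ^ (x - 1) * (exp 1 / x) ^ x * Gamma (x + 1) > 3.6593) := by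
  refine ⟨fun x hx ↦ ?_, 71 / 110, by norm_num, ?_⟩
  · rw [rpow_mul_rpow_mul_Gamma_eq_exp hx.1 hx.2, ← lt_log_iff_exp_lt (by norm_num)]
    calc _ ≤ rankinMajorant 5 x := by
          rw [rankinMajorant]
          gcongr
          exact log_Gamma_le_stirlingLogGamma (by linarith [hx.1]) 5
      _ < log 3.6594 := rankinMajorant_five_lt_log (Set.Ioc_subset_Icc_self hx)
  · rw [rpow_mul_rpow_mul_Gamma_eq_exp (by norm_num) (by norm_num), gt_iff_lt,
      ← log_lt_iff_lt_exp (by norm_num)]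
    have h_lower := stirlingLogGamma_sub_le_log_Gamma (z := 71 / 110 + 1) (by norm_num) 5
    have h_log := log_lt_rankinMajorant_five_sub
    rw [rankinMajorant] at h_log
    rw [Nat.cast_ofNat] at h_lower
    linarith

end

open Real in
/-- The function `f(x) = ((1-x)/(2-x))^(x-1) · (e/x)^x · Γ(x+1)` (real powers,
so that at `x = 1` the first factor is `0^0 = 1`, its limit as `x → 1⁻`)
satisfies `f(x) < 3.6594` on `[1/2, 1]`, and exceeds `3.6593` somewhere
on `[1/2, 1]`. -/
theorem rankin_constant_bounds :
    (∀ x ∈ Set.Icc (1 / 2 : ℝ) 1,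
      ((1 - x) / (2 - x)) ^ (x - 1) * (exp 1 / x) ^ x * Gamma (x + 1) < 3.6594) ∧
    (∃ x ∈ Set.Icc (1 / 2 : ℝ) 1,
      ((1 - x) / (2 - x)) ^ (x - 1) * (exp 1 / x) ^ x * Gamma (x + 1) > 3.6593) :=
  ⟨fun x hx ↦ rankin_constant_bounds_general.1 x ⟨by linarith [hx.1], hx.2⟩,
    rankin_constant_bounds_general.2⟩
end

section
/- For every n ≥ 1 there exists a full-rank lattice L in ℝⁿ such that every nonzero vector x ∈ L satisfies ‖x‖₁ > (ζ(n)·n!·det(L))^{1/n}/2, where ζ is the Riemann zeta function. -/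
/-!
For a prime `p` and `u ∈ 𝔽ₚᵏ`, the lattice of all `y ∈ ℤᵏ⁺¹` with `y ≡ y₀ • (1, u)` modulo `p` has
covolume `pᵏ`. A nonzero integer point `y` with coordinates of absolute value less than `p` lies in
at most one of these `pᵏ` lattices, and `-y` lies in the same one. Hence, by the pigeonhole
principle, a symmetric set of fewer than `2pᵏ` such points avoids the nonzero vectors of some
lattice. Normalising to covolume one and letting `p → ∞`, every balanced bounded body of volume
less than `2` with null boundary avoids the nonzero vectors of some unimodular lattice. An `ℓ¹`
ball of radius `r` has volume `(2r)ⁿ / n!`, and `ζ(n) ≤ ζ(2) < 2` for `n ≥ 2`. For `n = 1`, where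
`ζ` has its pole, Mathlib assigns `ζ(1) = (γ - log 4π) / 2`, which is less than `2` in absolute
value as well.
-/

open Filter MeasureTheory Topology
open scoped Finset Pointwise

section ModularLattice

variable {k : ℕ}

/-- The lattice of all `y ∈ ℤᵏ⁺¹` with `(y₁, …, yₖ) ≡ y₀ • u` modulo `p`. -/
def modularLattice (p : ℕ) (u : Fin k → ZMod p) : Submodule ℤ (Fin (k + 1) → ℤ) where
  carrier := {y | ∀ j, (y j.succ : ZMod p) = y 0 * u j}
  zero_mem' := by simp
  add_mem' hx hy j := by simp [hx j, hy j, add_mul]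
  smul_mem' c y hy j := by simp [hy j, mul_assoc]

lemma mem_modularLattice {p : ℕ} {u : Fin k → ZMod p} {y : Fin (k + 1) → ℤ} :
    y ∈ modularLattice p u ↔ ∀ j, (y j.succ : ZMod p) = y 0 * u j :=
  Iff.rfl

/-- The matrix with rows `(1, u), p e₁, …, p eₖ`, a basis of `modularLattice p u`. -/
def modularBasis (p : ℕ) (u : Fin k → ZMod p) : Matrix (Fin (k + 1)) (Fin (k + 1)) ℤ :=
  Matrix.of (Fin.cons (Fin.cons 1 fun j => (u j).cast) fun j => Pi.single j.succ (p : ℤ))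

lemma det_modularBasis (p : ℕ) (u : Fin k → ZMod p) : (modularBasis p u).det = (p : ℤ) ^ k := by
  have h : (modularBasis p u).IsUpperTriangular := fun i j hji => by
    cases i using Fin.cases with
    | zero => exact absurd hji (Fin.not_lt_zero j)
    | succ i => simpa [modularBasis] using Pi.single_eq_of_ne hji.ne _
  rw [Matrix.det_of_isUpperTriangular h]
  simp [Fin.prod_univ_succ, modularBasis]

lemma modularBasis_mem_modularLattice (p : ℕ) (u : Fin k → ZMod p) (i : Fin (k + 1)) :
    modularBasis p u i ∈ modularLattice p u := by
  rw [mem_modularLattice]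
  intro j
  cases i using Fin.cases with
  | zero => simp [modularBasis]
  | succ i => by_cases hij : j = i <;> simp [modularBasis, hij]

lemma eq_zero_of_mem_modularLattice {p : ℕ} {u : Fin k → ZMod p} {y : Fin (k + 1) → ℤ}
    (hy : y ∈ modularLattice p u) (hlt : ∀ i, |y i| < p) (h0 : (y 0 : ZMod p) = 0) : y = 0 := by
  funext i
  refine Int.eq_zero_of_abs_lt_dvd ((ZMod.intCast_zmod_eq_zero_iff_dvd (y i) p).1 ?_) (hlt i)
  cases i using Fin.cases with
  | zero => exact h0
  | succ j => rw [hy j, h0, zero_mul]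

theorem exists_modularLattice_forall_mem_eq_zero {p : ℕ} [Fact p.Prime]
    {S : Set (Fin (k + 1) → ℤ)} (hlt : ∀ y ∈ S, ∀ i, |y i| < p) (hneg : ∀ y ∈ S, -y ∈ S)
    (hcard : S.ncard < 2 * p ^ k) :
    ∃ u : Fin k → ZMod p, ∀ y ∈ modularLattice p u, y ∈ S → y = 0 := by
  classical
  have hfin : S.Finite := (Set.finite_Icc (fun _ => -(p : ℤ)) fun _ => p).subset fun y hy =>
    ⟨fun i => (abs_lt.1 (hlt y hy i)).1.le, fun i => (abs_lt.1 (hlt y hy i)).2.le⟩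
  lift S to Finset (Fin (k + 1) → ℤ) using hfin
  simp only [Finset.mem_coe, Set.ncard_coe_finset] at hlt hneg hcard ⊢
  let slope (y : Fin (k + 1) → ℤ) (j : Fin k) : ZMod p := y j.succ / y 0
  obtain ⟨u, -, hu⟩ : ∃ u ∈ Finset.univ, #{y ∈ S | slope y = u} < 2 :=
    Finset.exists_card_fiber_lt_of_card_lt_mul (by simpa [ZMod.card, mul_comm] using hcard)
  refine ⟨u, fun y hyu hyS => ?_⟩
  by_contra hy
  have hy0 : (y 0 : ZMod p) ≠ 0 := fun h0 =>
    hy (eq_zero_of_mem_modularLattice hyu (hlt y hyS) h0)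
  have hslope : slope y = u := funext fun j => by
    simp only [slope, hyu j, mul_div_cancel_left₀ _ hy0]
  have hslope_neg : slope (-y) = u := by
    rw [← hslope]
    funext j
    simp [slope, neg_div_neg_eq]
  have heq : y = -y := Finset.card_le_one.1 (Nat.le_of_lt_succ hu)
    y (by simp [hyS, hslope]) (-y) (by simp [hneg y hyS, hslope_neg])
  exact hy (self_eq_neg.1 heq)

lemma abs_det_smul_modularBasis {p : ℕ} {t : ℝ} (ht : 0 < t) (htp : t ^ (k + 1) = (p : ℝ) ^ k)
    (u : Fin k → ZMod p) :
    |(Matrix.of fun i => t⁻¹ • ((↑) ∘ modularBasis p u i : Fin (k + 1) → ℝ)).det| = 1 := by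
  have h : (Matrix.of fun i => t⁻¹ • ((↑) ∘ modularBasis p u i : Fin (k + 1) → ℝ)) =
      t⁻¹ • (modularBasis p u).map (Int.castRingHom ℝ) := rfl
  rw [h, Matrix.det_smul, ← RingHom.mapMatrix_apply, ← RingHom.map_det, det_modularBasis]
  simp [← htp, ht.ne']

lemma exists_mem_modularLattice_of_mem_span {p : ℕ} {t : ℝ} {u : Fin k → ZMod p}
    {x : Fin (k + 1) → ℝ} (hx : x ∈ Submodule.span ℤ (Set.range fun i =>
      t⁻¹ • ((↑) ∘ modularBasis p u i : Fin (k + 1) → ℝ))) :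
    ∃ y ∈ modularLattice p u, t⁻¹ • ((↑) ∘ y : Fin (k + 1) → ℝ) = x := by
  let f : (Fin (k + 1) → ℤ) →ₗ[ℤ] (Fin (k + 1) → ℝ) :=
    t⁻¹ • (Algebra.linearMap ℤ ℝ).compLeft (Fin (k + 1))
  have hle : Submodule.span ℤ (Set.range fun i => f (modularBasis p u i)) ≤
      (modularLattice p u).map f := by
    rw [Submodule.span_le, Set.range_subset_iff]
    exact fun i => Submodule.mem_map_of_mem (modularBasis_mem_modularLattice p u i)
  exact hle hx

end ModularLattice

section LatticePoints

variable {ι : Type*}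

lemma ncard_setOf_smul_intCast_mem [Finite ι] (K : Set (ι → ℝ)) {c : ℝ} (hc : c ≠ 0) :
    {y : ι → ℤ | c • ((↑) ∘ y : ι → ℝ) ∈ K}.ncard =
      Nat.card ↑(K ∩ c • (Submodule.span ℤ (Set.range (Pi.basisFun ℝ ι)) : Set (ι → ℝ))) := by
  have hinj : Function.Injective fun y : ι → ℤ => c • ((↑) ∘ y : ι → ℝ) :=
    (smul_right_injective _ hc).comp Int.cast_injective.comp_left
  have hrange : Set.range (fun y : ι → ℤ => c • ((↑) ∘ y : ι → ℝ)) =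
      c • (Submodule.span ℤ (Set.range (Pi.basisFun ℝ ι)) : Set (ι → ℝ)) := by
    rw [← Set.image_smul, Set.range_comp' (fun x : ι → ℝ => c • x)]
    congr 1
    ext x
    simp only [Set.mem_range, SetLike.mem_coe, Module.Basis.mem_span_iff_repr_mem,
      Pi.basisFun_repr, algebraMap_int_eq, eq_intCast]
    exact ⟨fun ⟨y, hy⟩ i => ⟨y i, congrFun hy i⟩, fun h => ⟨_, funext fun i => (h i).choose_spec⟩⟩
  rw [Nat.card_coe_set_eq, ← hrange, ← Set.image_preimage_eq_inter_range,
    Set.ncard_image_of_injective _ hinj]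
  rfl

theorem tendsto_ncard_setOf_smul_intCast_mem_div_pow [Fintype ι] {K : Set (ι → ℝ)}
    (hK : Balanced ℝ K) (hb : Bornology.IsBounded K) (hm : MeasurableSet K)
    (hfr : volume (frontier K) = 0) :
    Tendsto (fun t : ℝ => ({y : ι → ℤ | t⁻¹ • ((↑) ∘ y : ι → ℝ) ∈ K}.ncard : ℝ) /
      t ^ Fintype.card ι) atTop (𝓝 (volume.real K)) := by
  refine (tendsto_card_div_pow_atTop_volume' K hb hm hfr fun x y hx hxy =>
    hK.smul_mono ?_).congr' ?_
  · rwa [Real.norm_of_nonneg hx.le, Real.norm_of_nonneg (hx.le.trans hxy)]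
  · filter_upwards [eventually_ne_atTop 0] with t ht
    rw [ncard_setOf_smul_intCast_mem K (inv_ne_zero ht)]

end LatticePoints

lemma exists_prime_pow_eq_pow {k : ℕ} (hk : k ≠ 0) (R : ℝ) {P : ℝ → Prop}
    (hP : ∀ᶠ t in atTop, P t) :
    ∃ p : ℕ, p.Prime ∧ ∃ t : ℝ, 0 < t ∧ t ^ (k + 1) = (p : ℝ) ^ k ∧ R * t < p ∧ P t := by
  let t (p : ℕ) : ℝ := ((p : ℝ) ^ k) ^ ((k + 1 : ℕ) : ℝ)⁻¹
  have ht_pow (p : ℕ) : t p ^ (k + 1) = (p : ℝ) ^ k :=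
    Real.rpow_inv_natCast_pow (by positivity) k.succ_ne_zero
  have ht : Tendsto t atTop atTop :=
    (tendsto_rpow_atTop (by positivity)).comp
      ((tendsto_pow_atTop hk).comp tendsto_natCast_atTop_atTop)
  have hlarge : ∀ᶠ p : ℕ in atTop, P (t p) ∧ 0 < t p ∧ R ^ (k + 1) < (p : ℝ) :=
    (ht.eventually hP).and <| (ht.eventually_gt_atTop 0).and <|
      tendsto_natCast_atTop_atTop.eventually_gt_atTop (R ^ (k + 1))
  have hprime : ∃ᶠ p : ℕ in atTop, p.Prime :=
    Nat.frequently_atTop_iff_infinite.2 Nat.infinite_setOfPred_prime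
  obtain ⟨p, hp, hPt, ht0, hRp⟩ := (hprime.and_eventually hlarge).exists
  have hp0 : (0 : ℝ) < p := by exact_mod_cast hp.pos
  refine ⟨p, hp, t p, ht0, ht_pow p, ?_, hPt⟩
  refine lt_of_pow_lt_pow_left₀ (k + 1) hp0.le ?_
  calc (R * t p) ^ (k + 1) = R ^ (k + 1) * (p : ℝ) ^ k := by rw [mul_pow, ht_pow]
    _ < p * (p : ℝ) ^ k := by gcongr
    _ = (p : ℝ) ^ (k + 1) := (pow_succ' _ _).symm

section StarBody

variable {k : ℕ} {K : Set (Fin (k + 1) → ℝ)}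

lemma eventually_ncard_setOf_smul_intCast_mem_lt (hK : Balanced ℝ K)
    (hb : Bornology.IsBounded K) (hm : MeasurableSet K) (hfr : volume (frontier K) = 0)
    (hvol : volume K < 2) :
    ∀ᶠ t : ℝ in atTop, ({y : Fin (k + 1) → ℤ | t⁻¹ • ((↑) ∘ y : Fin (k + 1) → ℝ) ∈ K}.ncard : ℝ) <
      2 * t ^ (k + 1) := by
  have hlim := tendsto_ncard_setOf_smul_intCast_mem_div_pow hK hb hm hfr
  have hvol' : volume.real K < 2 := by
    simpa [Measure.real] using ENNReal.toReal_strict_mono ENNReal.ofNat_ne_top hvol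
  filter_upwards [hlim.eventually_lt_const hvol', eventually_gt_atTop 0] with t ht ht0
  rwa [Fintype.card_fin, div_lt_iff₀ (by positivity)] at ht

theorem exists_modularLattice_forall_smul_mem_eq_zero (hk : k ≠ 0) (hK : Balanced ℝ K)
    (hb : Bornology.IsBounded K) (hm : MeasurableSet K) (hfr : volume (frontier K) = 0)
    (hvol : volume K < 2) :
    ∃ (p : ℕ) (t : ℝ) (u : Fin k → ZMod p), 0 < t ∧ t ^ (k + 1) = (p : ℝ) ^ k ∧
      ∀ y ∈ modularLattice p u, t⁻¹ • ((↑) ∘ y : Fin (k + 1) → ℝ) ∈ K → y = 0 := by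
  obtain ⟨R, hR⟩ := hb.exists_norm_le
  obtain ⟨p, hp, t, ht, htp, hRt, hcount⟩ := exists_prime_pow_eq_pow hk R
    (eventually_ncard_setOf_smul_intCast_mem_lt hK hb hm hfr hvol)
  have hlt : ∀ y : Fin (k + 1) → ℤ, t⁻¹ • ((↑) ∘ y : Fin (k + 1) → ℝ) ∈ K → ∀ i, |y i| < p := by
    intro y hy i
    have hyR : |t⁻¹ * (y i : ℝ)| ≤ R := (norm_le_pi_norm _ i).trans (hR _ hy)
    rw [abs_mul, abs_of_pos (by positivity), inv_mul_le_iff₀ ht, mul_comm] at hyR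
    exact_mod_cast hyR.trans_lt hRt
  have hneg : ∀ y : Fin (k + 1) → ℤ, t⁻¹ • ((↑) ∘ y : Fin (k + 1) → ℝ) ∈ K →
      t⁻¹ • ((↑) ∘ (-y) : Fin (k + 1) → ℝ) ∈ K := by
    intro y hy
    have hcast : ((↑) ∘ (-y) : Fin (k + 1) → ℝ) = -((↑) ∘ y) := funext fun i => Int.cast_neg (y i)
    rwa [hcast, smul_neg, hK.neg_mem_iff]
  have := Fact.mk hp
  obtain ⟨u, hu⟩ := exists_modularLattice_forall_mem_eq_zero hlt hneg
    (by rw [htp] at hcount; exact_mod_cast hcount)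
  exact ⟨p, t, u, ht, htp, hu⟩

lemma abs_lt_one_of_mem_of_volume_lt_two {K : Set (Fin 1 → ℝ)} (hK : Balanced ℝ K)
    (hvol : volume K < 2) {x : Fin 1 → ℝ} (hx : x ∈ K) : |x 0| < 1 := by
  by_contra! hx1
  have hx0 : x 0 ≠ 0 := abs_pos.1 (one_pos.trans_le hx1)
  have hsub : Set.Icc (-1) 1 ⊆ K := fun y hy => by
    have hy1 : |y 0| ≤ 1 := abs_le.2 ⟨hy.1 0, hy.2 0⟩
    have hyx : (y 0 / x 0) • x = y := by
      ext i
      simp [Subsingleton.elim i 0, hx0]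
    rw [← hyx]
    refine hK.smul_mem ?_ hx
    rw [Real.norm_eq_abs, abs_div]
    exact div_le_one_of_le₀ (hy1.trans hx1) (abs_nonneg _)
  refine hvol.not_ge ?_
  calc (2 : ENNReal) = volume (Set.Icc (-1 : Fin 1 → ℝ) 1) := by
        norm_num [Real.volume_Icc_pi]
    _ ≤ volume K := measure_mono hsub

theorem exists_abs_det_eq_one_forall_mem_span_notMem {n : ℕ} {K : Set (Fin n → ℝ)}
    (hK : Balanced ℝ K) (hb : Bornology.IsBounded K) (hm : MeasurableSet K)
    (hfr : volume (frontier K) = 0) (hvol : volume K < 2) :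
    ∃ b : Fin n → Fin n → ℝ, |(Matrix.of b).det| = 1 ∧
      ∀ x ∈ Submodule.span ℤ (Set.range b), x ≠ 0 → x ∉ K := by
  obtain _ | k := n
  · exact ⟨0, by simp, fun x _ hx => (hx (Subsingleton.elim x 0)).elim⟩
  obtain ⟨p, t, u, ht, htp, hu⟩ : ∃ (p : ℕ) (t : ℝ) (u : Fin k → ZMod p),
      0 < t ∧ t ^ (k + 1) = (p : ℝ) ^ k ∧
      ∀ y ∈ modularLattice p u, t⁻¹ • ((↑) ∘ y : Fin (k + 1) → ℝ) ∈ K → y = 0 := by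
    obtain rfl | hk := eq_or_ne k 0
    · refine ⟨1, 1, 0, one_pos, by simp, fun y _ hy => funext fun i => ?_⟩
      have hy0 : |(y 0 : ℝ)| < 1 := by
        simpa using abs_lt_one_of_mem_of_volume_lt_two hK hvol hy
      rw [Fin.fin_one_eq_zero i]
      exact Int.abs_lt_one_iff.1 (by exact_mod_cast hy0)
    · exact exists_modularLattice_forall_smul_mem_eq_zero hk hK hb hm hfr hvol
  refine ⟨_, abs_det_smul_modularBasis ht htp u, fun x hx hx0 hxK => hx0 ?_⟩
  obtain ⟨y, hyu, rfl⟩ := exists_mem_modularLattice_of_mem_span hx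
  rw [hu y hyu hxK]
  ext
  simp

end StarBody

section L1Ball

variable {ι : Type*} [Fintype ι] (r : ℝ)

lemma balanced_setOf_sum_abs_le : Balanced ℝ {x : ι → ℝ | ∑ i, |x i| ≤ r} := by
  refine balanced_iff_smul_mem.2 fun a ha x hx => ?_
  calc ∑ i, |(a • x) i| = |a| * ∑ i, |x i| := by simp [abs_mul, Finset.mul_sum]
    _ ≤ ∑ i, |x i| := mul_le_of_le_one_left (by positivity) ha
    _ ≤ r := hx

lemma convex_setOf_sum_abs_le : Convex ℝ {x : ι → ℝ | ∑ i, |x i| ≤ r} := by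
  intro x hx y hy a b ha hb hab
  calc ∑ i, |(a • x + b • y) i| ≤ ∑ i, (a * |x i| + b * |y i|) := by
        gcongr with i
        simpa [abs_mul, abs_of_nonneg, ha, hb] using abs_add_le (a * x i) (b * y i)
    _ = a * ∑ i, |x i| + b * ∑ i, |y i| := by simp only [Finset.sum_add_distrib, Finset.mul_sum]
    _ ≤ a * r + b * r := by gcongr <;> assumption
    _ = r := by rw [← add_mul, hab, one_mul]

lemma isBounded_setOf_sum_abs_le : Bornology.IsBounded {x : ι → ℝ | ∑ i, |x i| ≤ r} := by
  refine isBounded_iff_forall_norm_le.2 ⟨r, fun x hx => le_trans ?_ hx⟩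
  exact (pi_norm_le_iff_of_nonneg (by positivity)).2 fun i =>
    Finset.single_le_sum (f := fun i => |x i|) (fun j _ => abs_nonneg (x j)) (Finset.mem_univ i)

lemma measurableSet_setOf_sum_abs_le : MeasurableSet {x : ι → ℝ | ∑ i, |x i| ≤ r} :=
  measurableSet_le (by fun_prop) measurable_const

lemma volume_frontier_setOf_sum_abs_le : volume (frontier {x : ι → ℝ | ∑ i, |x i| ≤ r}) = 0 :=
  Convex.addHaar_frontier (E := ι → ℝ) volume (convex_setOf_sum_abs_le r)

lemma volume_setOf_sum_abs_le {r : ℝ} (hr : 0 ≤ r) :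
    volume {x : ι → ℝ | ∑ i, |x i| ≤ r} =
      ENNReal.ofReal ((2 * r) ^ Fintype.card ι / (Fintype.card ι).factorial) := by
  cases isEmpty_or_nonempty ι
  · simp [hr, volume_pi]
  have h := volume_sum_rpow_le ι le_rfl r
  simp only [Real.rpow_one, div_one, one_add_one_eq_two, Real.Gamma_two, mul_one,
    Real.Gamma_nat_eq_factorial] at h
  rw [h, ← ENNReal.ofReal_pow hr, ← ENNReal.ofReal_mul (by positivity)]
  congr 1
  ring

end L1Ball

lemma norm_riemannZeta_natCast_lt_two {n : ℕ} (hn : 1 ≤ n) : ‖riemannZeta n‖ < 2 := by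
  obtain rfl | hn := hn.eq_or_lt
  · have hlog0 : 0 ≤ Real.log (4 * Real.pi) := Real.log_nonneg (by linarith [Real.pi_gt_three])
    have hlog4 : Real.log (4 * Real.pi) < 4 :=
      calc Real.log (4 * Real.pi) ≤ Real.log (2 ^ 4) :=
            Real.log_le_log (by positivity) (by linarith [Real.pi_le_four])
        _ = 4 * Real.log 2 := by simp [Real.log_pow]
        _ < 4 := by linarith [Real.log_two_lt_d9]
    have hzeta : riemannZeta (1 : ℕ) =
        ((Real.eulerMascheroniConstant - Real.log (4 * Real.pi)) / 2 : ℝ) := by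
      rw [Nat.cast_one, riemannZeta_one]
      push_cast [Complex.ofReal_log (show 0 ≤ 4 * Real.pi by positivity)]
      rfl
    rw [hzeta, Complex.norm_real, Real.norm_eq_abs, abs_lt]
    constructor <;> linarith [Real.one_half_lt_eulerMascheroniConstant,
      Real.eulerMascheroniConstant_lt_two_thirds]
  · have hle (i : ℕ) : ‖1 / (i : ℂ) ^ n‖ ≤ 1 / (i : ℝ) ^ 2 := by
      obtain rfl | hi := i.eq_zero_or_pos
      · simp [show n ≠ 0 by lia]
      · have : (1 : ℝ) ≤ i := by exact_mod_cast hi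
        rw [norm_div, norm_one, norm_pow, Complex.norm_natCast]
        gcongr
        exact hn
    calc ‖riemannZeta n‖ = ‖∑' i : ℕ, 1 / (i : ℂ) ^ n‖ := by rw [zeta_nat_eq_tsum_of_gt_one hn]
      _ ≤ Real.pi ^ 2 / 6 := tsum_of_norm_bounded hasSum_zeta_two hle
      _ < 2 := by nlinarith [Real.pi_lt_d2, Real.pi_pos]

theorem exists_abs_det_eq_one_forall_mem_span_lt_sum_abs {n : ℕ} {r : ℝ} (hr : 0 ≤ r)
    (h : (2 * r) ^ n < 2 * n.factorial) :
    ∃ b : Fin n → Fin n → ℝ, |(Matrix.of b).det| = 1 ∧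
      ∀ x ∈ Submodule.span ℤ (Set.range b), x ≠ 0 → r < ∑ i, |x i| := by
  have hvol : volume {x : Fin n → ℝ | ∑ i, |x i| ≤ r} < 2 := by
    rw [volume_setOf_sum_abs_le hr, Fintype.card_fin, ENNReal.ofReal_lt_ofNat]
    exact (div_lt_iff₀ (by positivity)).2 h
  obtain ⟨b, hdet, hb⟩ := exists_abs_det_eq_one_forall_mem_span_notMem
    (balanced_setOf_sum_abs_le r) (isBounded_setOf_sum_abs_le r)
    (measurableSet_setOf_sum_abs_le r) (volume_frontier_setOf_sum_abs_le r) hvol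
  exact ⟨b, hdet, fun x hx hx0 => not_le.1 (hb x hx hx0)⟩

theorem minkowski_hlawka_l1_general (n : ℕ) {c : ℝ} (hc : c < 2) :
    ∃ b : Fin n → Fin n → ℝ, (Matrix.of b).det ≠ 0 ∧
      ∀ x ∈ Submodule.span ℤ (Set.range b), x ≠ 0 →
        c * n.factorial * |(Matrix.of b).det| < (2 * ∑ i, |x i|) ^ n := by
  obtain rfl | hn := eq_or_ne n 0
  · exact ⟨0, by simp, fun x _ hx => (hx (Subsingleton.elim x 0)).elim⟩
  obtain ⟨r, hr, hrn⟩ : ∃ r : ℝ, 0 ≤ r ∧ (2 * r) ^ n = max c 0 * n.factorial := by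
    refine ⟨(max c 0 * n.factorial) ^ (n : ℝ)⁻¹ / 2, by positivity, ?_⟩
    rw [mul_div_cancel₀ _ two_ne_zero, Real.rpow_inv_natCast_pow (by positivity) hn]
  have hlt : (2 * r) ^ n < 2 * n.factorial := by
    rw [hrn]
    exact mul_lt_mul_of_pos_right (max_lt hc two_pos) (by positivity)
  obtain ⟨b, hdet, hb⟩ := exists_abs_det_eq_one_forall_mem_span_lt_sum_abs hr hlt
  refine ⟨b, abs_pos.1 (hdet ▸ one_pos), fun x hx hx0 => ?_⟩
  calc c * n.factorial * |(Matrix.of b).det| = c * n.factorial := by rw [hdet, mul_one]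
    _ ≤ max c 0 * n.factorial := by gcongr; exact le_max_left c 0
    _ = (2 * r) ^ n := hrn.symm
    _ < (2 * ∑ i, |x i|) ^ n := by gcongr; exact hb x hx hx0

lemma rpow_one_div_div_two_lt {n : ℕ} (hn : n ≠ 0) {a s : ℝ} (hs : 0 ≤ s)
    (h : |a| < (2 * s) ^ n) : a ^ ((1 : ℝ) / n) / 2 < s := by
  have : a ^ ((1 : ℝ) / n) < 2 * s :=
    calc a ^ ((1 : ℝ) / n) ≤ |a| ^ (n : ℝ)⁻¹ := by
          rw [one_div]; exact (le_abs_self _).trans (Real.abs_rpow_le_abs_rpow a _)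
      _ < 2 * s := by
          rw [Real.rpow_inv_lt_iff_of_pos (abs_nonneg a) (by positivity) (by positivity)]
          exact_mod_cast h
  linarith

/-- Minkowski–Hlawka for the ℓ¹ norm: for every `n ≥ 1` there is a full-rank
lattice in `ℝⁿ` (the ℤ-span of an ℝ-basis, given by the rows `b` of a matrix
with nonzero determinant, whose covolume is `|det b|`) all of whose nonzero
vectors `x` satisfy `‖x‖₁ > (ζ(n)·n!·det L)^(1/n) / 2`. -/
theorem minkowski_hlawka_l1 (n : ℕ) (hn : 1 ≤ n) :
    ∃ b : Fin n → Fin n → ℝ, (Matrix.of b).det ≠ 0 ∧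
      ∀ x ∈ Submodule.span ℤ (Set.range b), x ≠ 0 →
        ∑ i, |x i| >
          ((riemannZeta n).re * (n.factorial : ℝ) * |(Matrix.of b).det|) ^ ((1 : ℝ) / n) / 2 := by
  obtain ⟨b, hb, h⟩ := minkowski_hlawka_l1_general n <|
    (Complex.abs_re_le_norm _).trans_lt (norm_riemannZeta_natCast_lt_two hn)
  exact ⟨b, hb, fun x hx hx0 => rpow_one_div_div_two_lt (by lia) (by positivity)
    (by simpa [abs_mul] using h x hx hx0)⟩
end
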